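/- arXiv:1609.05007 — 4 statements merged into one kernel-verified Lean document; each statement's English description precedes it below -/
import Mathlib

section
/- Fix an integer r ≥ 2, rationals q_1,…,q_r ∈ (0,1) with q_1+⋯+q_r = 1, a rational α > 0, a real A > 0 and a real ε with 0 < ε < 1/6. Then there exist C > 0 and N₀ ∈ ℕ such that for every N ≥ N₀ and M ∈ ℕ with α·M = N, every K : Fin r → ℕ with K_i = q_i·M for every i, and every n : Fin r → ℕ with ∑_i n_i = N satisfying |n_i − N·q_i| ≤ A·N^{2/3−ε} for every i, one has |P^B(n|K) − G| ≤ C·N^{−3ε}·G, where G = exp(−N·∑_i (n_i/N − q_i)²/(2(1+α) q_i)) / ((2π(1+α)N)^{(r−1)/2} · ∏_i √q_i). -/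
open Finset

/-- The bosonic counting probability
`P^B(n|K) = (N!/∏ᵢ nᵢ!) ⬝ ((M-1)!/(M+N-1)!) ⬝ ∏ᵢ (Kᵢ+nᵢ-1)!/(Kᵢ-1)!`
with `M = ∑ᵢ Kᵢ` and `N = ∑ᵢ nᵢ`. -/
noncomputable def PB {r : ℕ} (M : ℕ) (n K : Fin r → ℕ) : ℝ :=
  ((∑ i, n i).factorial : ℝ) / (∏ i, ((n i).factorial : ℝ)) *
    (((M - 1).factorial : ℝ) / ((M + (∑ i, n i) - 1).factorial : ℝ)) *
    ∏ i, ((K i + n i - 1).factorial : ℝ) / ((K i - 1).factorial : ℝ)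

/-- The asymptotic Gaussian for the bosonic case at particle density `α = N/M`. -/
noncomputable def GaussB {r : ℕ} (N : ℕ) (n : Fin r → ℕ) (q : Fin r → ℚ) (α : ℚ) : ℝ :=
  Real.exp (-(N : ℝ) *
      ∑ i, ((n i : ℝ) / (N : ℝ) - (q i : ℝ)) ^ 2 / (2 * (1 + (α : ℝ)) * (q i : ℝ))) /
    ((2 * Real.pi * (1 + (α : ℝ)) * N) ^ (((r : ℝ) - 1) / 2) * ∏ i, Real.sqrt (q i : ℝ))

lemma stir_upper (n : ℕ) (hn : 1 ≤ n) :
    Real.log (Stirling.stirlingSeq (n+1)) - 1 / (4 * (n:ℝ)) ≤ Real.log (√Real.pi) := by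
  have hmono : Monotone (fun k : ℕ =>
      Real.log (Stirling.stirlingSeq (k+1+1)) - 1 / (4 * ((k:ℝ)+1))) := by
    apply monotone_nat_of_le_succ
    intro k
    have h := Stirling.log_stirlingSeq_sub_log_stirlingSeq_succ (k+1+1)
    push_cast at h ⊢
    have h2 : 1 / (4 * ((k:ℝ)+1+1)^2) ≤ 1 / (4 * ((k:ℝ)+1)) - 1 / (4 * ((k:ℝ)+1+1)) := by
      have : 1 / (4 * ((k:ℝ)+1)) - 1 / (4 * ((k:ℝ)+1+1)) = 1 / (4 * (((k:ℝ)+1) * ((k:ℝ)+1+1))) := by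
        field_simp; ring
      rw [this]
      apply one_div_le_one_div_of_le (by positivity)
      nlinarith [(Nat.cast_nonneg k : (0:ℝ) ≤ k)]
    linarith
  have hlim : Filter.Tendsto (fun k : ℕ =>
      Real.log (Stirling.stirlingSeq (k+1+1)) - 1 / (4 * ((k:ℝ)+1))) Filter.atTop
      (nhds (Real.log (√Real.pi) - 0)) := by
    apply Filter.Tendsto.sub
    · have h1 := (Filter.tendsto_add_atTop_iff_nat 2).2 Stirling.tendsto_stirlingSeq_sqrt_pi
      exact h1.log (by positivity)
    · have := (tendsto_one_div_add_atTop_nhds_zero_nat (𝕜 := ℝ)).const_mul (1/4)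
      simp only [mul_zero] at this
      refine this.congr fun k => ?_
      field_simp
  have := hmono.ge_of_tendsto hlim (n-1)
  obtain ⟨m, rfl⟩ : ∃ m, n = m + 1 := ⟨n-1, by omega⟩
  simpa using this

noncomputable def SS (x : ℝ) : ℝ :=
  x * Real.log x - x + Real.log x / 2 + Real.log (2 * Real.pi) / 2

lemma stir_abs (n : ℕ) (hn : 2 ≤ n) :
    |Real.log (n.factorial : ℝ) - SS n| ≤ 1 / (n:ℝ) := by
  obtain ⟨m, rfl⟩ : ∃ m, n = m + 1 := ⟨n-1, by omega⟩
  have h1 := stir_upper m (by omega)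
  have h2 := Stirling.le_log_factorial_stirling (n := m+1) (by omega)
  have h3 := Stirling.log_stirlingSeq_formula (m+1)
  have hm : (1:ℝ) ≤ m := by exact_mod_cast (by omega : 1 ≤ m)
  have h4 : 1 / (4 * (m:ℝ)) ≤ 1 / ((m:ℝ)+1) := by
    apply one_div_le_one_div_of_le (by positivity); linarith
  have hp : Real.log (√Real.pi) = Real.log Real.pi / 2 := Real.log_sqrt Real.pi_pos.le
  have e1 : Real.log (2 * ((m:ℝ)+1)) = Real.log 2 + Real.log ((m:ℝ)+1) :=
    Real.log_mul (by norm_num) (by positivity)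
  have e2 : Real.log (2 * Real.pi) = Real.log 2 + Real.log Real.pi :=
    Real.log_mul (by norm_num) (by positivity)
  have e3 : Real.log (((m:ℝ)+1) / Real.exp 1) = Real.log ((m:ℝ)+1) - 1 := by
    rw [Real.log_div (by positivity) (by positivity), Real.log_exp]
  have h5 : 0 ≤ 1 / ((m:ℝ)+1) := by positivity
  unfold SS
  push_cast at *
  rw [e1, e3] at h3
  rw [abs_le]
  constructor <;> linarith

lemma log_exp2 (t : ℝ) (ht : |t| ≤ 1/2) :
    |(1+t) * Real.log (1+t) - t - t^2/2| ≤ 4 * |t|^3 ∧ |Real.log (1+t)| ≤ 2 * |t| := by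
  have hb : (1:ℝ)/2 ≤ 1 - |t| := by linarith
  have hpos := abs_nonneg t
  have k2 := Real.abs_log_sub_add_sum_range_le (x := -t) (by rw [abs_neg]; linarith) 2
  have k0 := Real.abs_log_sub_add_sum_range_le (x := -t) (by rw [abs_neg]; linarith) 0
  simp only [Finset.sum_range_succ, Finset.sum_range_zero, abs_neg, sub_neg_eq_add] at k2 k0
  norm_num at k2 k0
  have d2 : |t|^3 / (1-|t|) ≤ 2 * |t|^3 := by
    rw [div_le_iff₀ (by linarith)]
    nlinarith [pow_nonneg hpos 3]
  have d0 : |t| / (1-|t|) ≤ 2 * |t| := by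
    rw [div_le_iff₀ (by linarith)]
    nlinarith
  refine ⟨?_, k0.trans d0⟩
  set ρ := -t + t^2/2 + Real.log (1+t) with hρ
  have hr : |ρ| ≤ 2 * |t|^3 := by
    refine le_trans ?_ d2
    convert k2 using 2
  have hl : Real.log (1+t) = t - t^2/2 + ρ := by rw [hρ]; ring
  have : (1+t) * Real.log (1+t) - t - t^2/2 = -t^3/2 + (1+t)*ρ := by rw [hl]; ring
  rw [this]
  have a1 : |-t^3/2| = |t|^3/2 := by rw [abs_div, abs_neg, abs_pow]; norm_num
  have a2 : |(1+t)*ρ| ≤ (3/2) * (2*|t|^3) := by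
    rw [abs_mul]
    apply mul_le_mul _ hr (abs_nonneg _) (by norm_num)
    have := abs_add_le 1 t
    rw [abs_one] at this
    linarith
  have := abs_add_le (-t^3/2) ((1+t)*ρ)
  have := pow_nonneg hpos 3
  linarith

noncomputable def FF (a d : ℝ) : ℝ := SS a + d * Real.log a + d^2 / (2*a)

lemma fac_approx (c N D a : ℝ) (n : ℕ) (hn : 2 ≤ n) (hc : 0 < c) (hc1 : c ≤ 1) (hN : 0 < N)
    (ha : c * N ≤ a) (hd : |(n:ℝ) - a| ≤ D) (hD : D ≤ c * N / 2) :
    |Real.log (n.factorial : ℝ) - FF a (n - a)| ≤ 4 / c^2 * (D^3/N^2 + D/N + 1/N) ∧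
    |Real.log ((n-1).factorial : ℝ) - (FF a (n - a) - Real.log a)|
      ≤ 4 / c^2 * (D^3/N^2 + D/N + 1/N) := by
  have hcN : 0 < c * N := by positivity
  have ha0 : 0 < a := by linarith
  have hn0 : (0:ℝ) < n := by exact_mod_cast (by omega : 0 < n)
  obtain ⟨t, ht⟩ : ∃ t, t = ((n:ℝ) - a) / a := ⟨_, rfl⟩
  have hat : (n:ℝ) - a = a * t := by rw [ht]; field_simp
  have hna : (n:ℝ) = a * (1 + t) := by linarith
  have htD : |t| ≤ D / (c*N) := by
    rw [ht, abs_div, abs_of_pos ha0]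
    exact div_le_div₀ ((abs_nonneg _).trans hd) hd hcN ha
  have hth : |t| ≤ 1/2 := by
    refine htD.trans ?_
    rw [div_le_iff₀ hcN]; linarith
  have h1t : 0 < 1 + t := by have := (abs_le.1 hth).1; linarith
  have hD0 : 0 ≤ D := (abs_nonneg _).trans hd
  obtain ⟨L3, L1⟩ := log_exp2 t hth
  have hlog : Real.log n = Real.log a + Real.log (1+t) := by
    rw [hna, Real.log_mul ha0.ne' h1t.ne']
  have key : SS n - FF a (n-a) = a * ((1+t) * Real.log (1+t) - t - t^2/2) + Real.log (1+t)/2 := by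
    unfold FF SS
    rw [hlog, hat, hna]
    field_simp
    ring
  have hst := stir_abs n hn
  -- bounds
  have hcc : c^2 ≤ c := by nlinarith
  have b1 : a * (4 * |t|^3) ≤ 4 / c^2 * (D^3/N^2) := by
    have : a * |t|^3 = |(n:ℝ) - a|^3 / a^2 := by
      rw [hat, abs_mul, abs_of_pos ha0]; field_simp
    calc a * (4 * |t|^3) = 4 * (|(n:ℝ) - a|^3 / a^2) := by rw [← this]; ring
      _ ≤ 4 * (D^3 / (c*N)^2) := by gcongr
      _ = _ := by field_simp
  have b2 : |t| ≤ 1 / c^2 * (D/N) := by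
    refine htD.trans ?_
    calc D / (c*N) = 1/c * (D/N) := by field_simp
      _ ≤ _ := by gcongr
  have b3 : 1 / (n:ℝ) ≤ 4 / c^2 * (1/N) := by
    have h2 : c * N / 2 ≤ n := by have := (abs_le.1 hd).1; linarith
    calc 1 / (n:ℝ) ≤ 1 / (c*N/2) := by gcongr
      _ = 2 / c * (1/N) := by field_simp
      _ ≤ 4 / c^2 * (1/N) := by gcongr; norm_num
  have b4 : 0 ≤ 1 / c^2 * (D/N) := by positivity
  have b5 : 4 / c^2 * (D^3/N^2 + D/N + 1/N) =
    4 / c^2 * (D^3/N^2) + 4 * (1 / c^2 * (D/N)) + 4 / c^2 * (1/N) := by ring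
  have b6 : |a * ((1+t) * Real.log (1+t) - t - t^2/2)| ≤ a * (4 * |t|^3) := by
    rw [abs_mul, abs_of_pos ha0]; gcongr
  have hfac : Real.log ((n-1).factorial : ℝ) = Real.log (n.factorial : ℝ) - Real.log n := by
    rw [← Nat.mul_factorial_pred (by omega : n ≠ 0)]
    push_cast
    rw [Real.log_mul hn0.ne' (by positivity)]; ring
  rw [b5, hfac, hlog]
  rw [abs_le] at L1 b6 hst
  constructor <;> rw [abs_le] <;> constructor <;> linarith [L1.1, L1.2, b6.1, b6.2, hst.1, hst.2]

lemma main_id {r : ℕ} (q d : Fin r → ℝ) (N M α : ℝ) (hN : 0 < N) (hM : 0 < M) (hα : α * M = N)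
    (hq : ∀ i, 0 < q i) (hqs : ∑ i, q i = 1) (hds : ∑ i, d i = 0) :
    FF N 0 + (FF M 0 - Real.log M) - (FF (M+N) 0 - Real.log (M+N)) +
      ∑ i, ((FF ((M+N) * q i) (d i) - Real.log ((M+N) * q i)) - FF (N * q i) (d i)
        - (FF (M * q i) 0 - Real.log (M * q i)))
    = -(∑ i, d i ^ 2 / (2 * (1 + α) * q i * N)) -
      (((r:ℝ) - 1) / 2 * Real.log (2 * Real.pi * (1 + α) * N) + ∑ i, Real.log (q i) / 2) := by
  have hS : 0 < M + N := by positivity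
  have hα' : 1 + α = (M + N) / M := by field_simp; linarith
  have hl : Real.log (2 * Real.pi * (1 + α) * N) =
      Real.log (2 * Real.pi) + (Real.log (M+N) - Real.log M) + Real.log N := by
    rw [hα', Real.log_mul (by positivity) hN.ne', Real.log_mul (by positivity) (by positivity),
      Real.log_div hS.ne' hM.ne']
  have hterm : ∀ i, ((FF ((M+N) * q i) (d i) - Real.log ((M+N) * q i)) - FF (N * q i) (d i)
        - (FF (M * q i) 0 - Real.log (M * q i))) =
      q i * ((M+N) * Real.log (M+N) - N * Real.log N - M * Real.log M)
      + d i * (Real.log (M+N) - Real.log N) - d i ^ 2 / (2 * (1 + α) * q i * N)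
      - Real.log (q i) / 2
      + (Real.log M - Real.log N - Real.log (M+N) - Real.log (2 * Real.pi)) / 2 := by
    intro i
    have hqi := hq i
    have e : d i ^ 2 / (2 * (1 + α) * q i * N)
        = d i ^ 2 / (2 * (N * q i)) - d i ^ 2 / (2 * ((M+N) * q i)) := by
      rw [hα']; field_simp; ring
    rw [e]
    unfold FF SS
    rw [Real.log_mul hS.ne' hqi.ne', Real.log_mul hN.ne' hqi.ne', Real.log_mul hM.ne' hqi.ne']
    ring
  rw [Finset.sum_congr rfl fun i _ => hterm i]
  simp only [Finset.sum_add_distrib, Finset.sum_sub_distrib, ← Finset.sum_mul, hqs, hds,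
    Finset.sum_const, Finset.card_univ, Fintype.card_fin, nsmul_eq_mul]
  rw [hl]
  unfold FF SS
  ring

lemma log_PB {r : ℕ} (M : ℕ) (n K : Fin r → ℕ) :
    0 < PB M n K ∧ Real.log (PB M n K) = Real.log ((∑ i, n i).factorial : ℝ)
      + Real.log ((M-1).factorial : ℝ) - Real.log ((M + (∑ i, n i) - 1).factorial : ℝ)
      + ∑ i, (Real.log ((K i + n i - 1).factorial : ℝ) - Real.log ((n i).factorial : ℝ)
          - Real.log ((K i - 1).factorial : ℝ)) := by
  have hf : ∀ m : ℕ, (m.factorial : ℝ) ≠ 0 := fun m => by positivity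
  have hp : ∏ i, ((n i).factorial : ℝ) ≠ 0 := Finset.prod_ne_zero_iff.2 fun i _ => hf _
  have hp2 : ∏ i, ((K i + n i - 1).factorial : ℝ) / ((K i - 1).factorial : ℝ) ≠ 0 :=
    Finset.prod_ne_zero_iff.2 fun i _ => div_ne_zero (hf _) (hf _)
  constructor
  · unfold PB; positivity
  · unfold PB
    rw [Real.log_mul (mul_ne_zero (div_ne_zero (hf _) hp) (div_ne_zero (hf _) (hf _))) hp2,
      Real.log_mul (div_ne_zero (hf _) hp) (div_ne_zero (hf _) (hf _)),
      Real.log_div (hf _) hp, Real.log_div (hf _) (hf _), Real.log_prod fun i _ => hf _,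
      Real.log_prod fun i _ => div_ne_zero (hf _) (hf _)]
    simp only [Real.log_div (hf _) (hf _), Finset.sum_sub_distrib]
    ring

lemma log_G {r : ℕ} (N : ℕ) (hN : 0 < N) (n : Fin r → ℕ) (q : Fin r → ℚ) (α : ℚ)
    (hα : 0 < α) (hq : ∀ i, 0 < q i) :
    0 < GaussB N n q α ∧ Real.log (GaussB N n q α) =
      -(∑ i, ((n i : ℝ) - N * q i) ^ 2 / (2 * (1 + (α:ℝ)) * q i * N)) -
      (((r:ℝ) - 1) / 2 * Real.log (2 * Real.pi * (1 + (α:ℝ)) * N)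
        + ∑ i, Real.log (q i : ℝ) / 2) := by
  have hN' : (0:ℝ) < N := by exact_mod_cast hN
  have hα' : (0:ℝ) < α := by exact_mod_cast hα
  have hq' : ∀ i, (0:ℝ) < q i := fun i => by exact_mod_cast hq i
  have hb : 0 < 2 * Real.pi * (1 + (α : ℝ)) * N := by positivity
  have hs : ∀ i, 0 < Real.sqrt (q i : ℝ) := fun i => Real.sqrt_pos.2 (hq' i)
  have hp : 0 < ∏ i, Real.sqrt (q i : ℝ) := Finset.prod_pos fun i _ => hs i
  have hr : 0 < (2 * Real.pi * (1 + (α : ℝ)) * N) ^ (((r : ℝ) - 1) / 2) := Real.rpow_pos_of_pos hb _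
  constructor
  · unfold GaussB; positivity
  · unfold GaussB
    rw [Real.log_div (Real.exp_pos _).ne' (mul_pos hr hp).ne', Real.log_exp,
      Real.log_mul hr.ne' hp.ne', Real.log_rpow hb, Real.log_prod fun i _ => (hs i).ne']
    congr 1
    · rw [neg_mul, Finset.mul_sum]
      congr 1
      refine Finset.sum_congr rfl fun i _ => ?_
      have := hq' i
      field_simp
    · congr 1
      exact Finset.sum_congr rfl fun i _ => Real.log_sqrt (hq' i).le

lemma final_exp (P G x B : ℝ) (hP : 0 < P) (hG : 0 < G)
    (h : |Real.log P - Real.log G| ≤ x) (hx : x ≤ B) : |P - G| ≤ Real.exp B * x * G := by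
  have e : P = G * Real.exp (Real.log P - Real.log G) := by
    rw [Real.exp_sub, Real.exp_log hP, Real.exp_log hG]; field_simp
  set y := Real.log P - Real.log G
  have h1 : P - G = G * (Real.exp y - 1) := by rw [e]; ring
  have hy := abs_le.1 h
  have hx0 : 0 ≤ x := (abs_nonneg _).trans h
  have h2 : |Real.exp y - 1| ≤ Real.exp B * x := by
    have hB : 1 ≤ Real.exp B := Real.one_le_exp (hx0.trans hx)
    rw [abs_le]
    constructor
    · have := Real.add_one_le_exp y
      nlinarith
    · have k := Real.add_one_le_exp (-y)
      have k2 : Real.exp y * Real.exp (-y) = 1 := by rw [← Real.exp_add]; simp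
      have k3 : Real.exp y ≤ Real.exp B := Real.exp_le_exp.2 (hy.2.trans hx)
      have k4 := Real.exp_pos y
      calc Real.exp y - 1 ≤ Real.exp y * y := by nlinarith
        _ ≤ Real.exp y * x := by gcongr; exact hy.2
        _ ≤ _ := by gcongr
  rw [h1, abs_mul, abs_of_pos hG, mul_comm]
  gcongr

lemma err_bound (A ε N : ℝ) (hA : 0 < A) (hε0 : 0 < ε) (hε1 : ε < 1/6) (hN : 1 ≤ N) :
    (A * N ^ ((2:ℝ)/3 - ε))^3 / N^2 + (A * N ^ ((2:ℝ)/3 - ε)) / N + 1 / N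
      ≤ (A^3 + A + 1) * N ^ (-(3*ε)) := by
  have h0 : 0 < N := by linarith
  have e1 : (A * N ^ ((2:ℝ)/3 - ε))^3 / N^2 = A^3 * N ^ (-(3*ε)) := by
    rw [mul_pow, ← Real.rpow_natCast (N ^ _), ← Real.rpow_mul h0.le, mul_div_assoc,
      ← Real.rpow_natCast N 2, ← Real.rpow_sub h0]
    congr 2; push_cast; ring
  have e2 : (A * N ^ ((2:ℝ)/3 - ε)) / N ≤ A * N ^ (-(3*ε)) := by
    rw [mul_div_assoc]
    gcongr
    rw [← Real.rpow_sub_one h0.ne']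
    exact Real.rpow_le_rpow_of_exponent_le hN (by linarith)
  have e3 : 1 / N ≤ N ^ (-(3*ε)) := by
    rw [one_div, ← Real.rpow_neg_one]
    exact Real.rpow_le_rpow_of_exponent_le hN (by linarith)
  rw [e1]; linarith

lemma large_N (A ε c : ℝ) (hc : 0 < c) (hε0 : 0 < ε) :
    ∃ N₀ : ℕ, ∀ N : ℕ, N₀ ≤ N → 1 ≤ N ∧ (4:ℝ) ≤ c * N ∧
      A * (N:ℝ) ^ ((2:ℝ)/3 - ε) ≤ c * N / 2 := by
  have h1 : Filter.Tendsto (fun N : ℕ => A * (N:ℝ) ^ (-(1/3 + ε))) Filter.atTop (nhds (A * 0)) :=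
    ((tendsto_rpow_neg_atTop (by linarith)).comp tendsto_natCast_atTop_atTop).const_mul A
  have h2 := h1.eventually (gt_mem_nhds (show A * 0 < c/2 by simpa using hc))
  have h3 : Filter.Tendsto (fun N : ℕ => c * (N:ℝ)) Filter.atTop Filter.atTop :=
    tendsto_natCast_atTop_atTop.const_mul_atTop hc
  obtain ⟨N₀, h⟩ := Filter.eventually_atTop.1
    ((h2.and (h3.eventually_ge_atTop 4)).and (Filter.eventually_ge_atTop 1))
  refine ⟨N₀, fun N hN => ?_⟩
  obtain ⟨⟨a1, a2⟩, a3⟩ := h N hN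
  refine ⟨a3, a2, ?_⟩
  have h0 : (0:ℝ) < N := by exact_mod_cast a3
  have : (N:ℝ) ^ ((2:ℝ)/3 - ε) = (N:ℝ) ^ (-(1/3 + ε)) * N := by
    rw [← Real.rpow_add_one h0.ne']; congr 1; ring
  rw [this]
  nlinarith

set_option maxHeartbeats 2000000 in
/-- Quantum de Moivre–Laplace theorem for bosons: at fixed density `α = N/M`,
for counts in the central region `|nᵢ - N qᵢ| ≤ A N^(2/3-ε)`, the average bosonic
counting probability is the Gaussian up to a relative error `O(N^(-3ε))`. -/
theorem deMoivreLaplace_bosons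
    (r : ℕ) (hr : 2 ≤ r) (q : Fin r → ℚ)
    (hq0 : ∀ i, 0 < q i) (hq1 : ∀ i, q i < 1) (hqsum : ∑ i, q i = 1)
    (α : ℚ) (hα : 0 < α)
    (A ε : ℝ) (hA : 0 < A) (hε0 : 0 < ε) (hε1 : ε < 1 / 6) :
    ∃ C > 0, ∃ N₀ : ℕ, ∀ N : ℕ, N₀ ≤ N → ∀ M : ℕ, α * M = N →
      ∀ K : Fin r → ℕ, (∀ i, (K i : ℚ) = q i * M) →
      ∀ n : Fin r → ℕ, ∑ i, n i = N →
      (∀ i, |(n i : ℝ) - (N : ℝ) * (q i : ℝ)| ≤ A * (N : ℝ) ^ ((2 : ℝ) / 3 - ε)) →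
      |PB M n K - GaussB N n q α| ≤ C * (N : ℝ) ^ (-(3 * ε)) * GaussB N n q α := by
  have hα' : (0:ℝ) < α := by exact_mod_cast hα
  have hq' : ∀ i, (0:ℝ) < q i := fun i => by exact_mod_cast hq0 i
  have hqs : ∑ i, (q i : ℝ) = 1 := by exact_mod_cast hqsum
  obtain ⟨q0, hq0p, hq01, hq0le⟩ : ∃ q0 : ℝ, 0 < q0 ∧ q0 ≤ 1 ∧ ∀ i, q0 ≤ q i := by
    have : Nonempty (Fin r) := ⟨⟨0, by omega⟩⟩
    obtain ⟨j, hj⟩ := Finite.exists_min (fun i => (q i : ℝ))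
    exact ⟨q j, hq' j, by exact_mod_cast (hq1 j).le, hj⟩
  obtain ⟨c, hcdef⟩ : ∃ c, c = q0 / (1 + (α:ℝ)) := ⟨_, rfl⟩
  have hc : 0 < c := by rw [hcdef]; positivity
  have hcq : c ≤ q0 := by
    rw [hcdef, div_le_iff₀ (by positivity)]; nlinarith
  have hcα : c * α ≤ q0 := by
    rw [hcdef, div_mul_eq_mul_div, div_le_iff₀ (by positivity)]; nlinarith
  have hc1 : c ≤ 1 := hcq.trans hq01
  obtain ⟨N₀, hN₀⟩ := large_N A ε c hc hε0
  set B : ℝ := (3 + 3 * r) * (4 / c^2 * (A^3 + A + 1)) with hB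
  have hBpos : 0 < B := by positivity
  refine ⟨Real.exp B * B, by positivity, N₀, ?_⟩
  intro N hN M hM K hK n hn hdev
  obtain ⟨hN1, hN4, hND⟩ := hN₀ N hN
  have hNr : (1:ℝ) ≤ N := by exact_mod_cast hN1
  have hNp : (0:ℝ) < N := by linarith
  have hMr : (α:ℝ) * M = N := by exact_mod_cast hM
  have hMp : (0:ℝ) < M := by
    rcases (Nat.cast_nonneg M : (0:ℝ) ≤ M).lt_or_eq with h | h
    · exact h
    · rw [← h] at hMr; simp at hMr; linarith
  have hKr : ∀ i, (K i : ℝ) = M * q i := fun i => by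
    rw [mul_comm]; exact_mod_cast hK i
  have hE := err_bound A ε N hA hε0 hε1 hNr
  set D : ℝ := A * (N:ℝ) ^ ((2:ℝ)/3 - ε) with hDdef
  have hD0 : 0 ≤ D := by positivity
  have happ := fac_approx c N D
  set E : ℝ := 4 / c^2 * (D^3/(N:ℝ)^2 + D/N + 1/N) with hEdef
  -- lower bounds on the centres
  have hcN : ∀ x : ℝ, q0 ≤ x → c * N ≤ N * x := fun x hx => by nlinarith
  have hcM : ∀ x : ℝ, q0 ≤ x → c * N ≤ M * x := fun x hx => by
    rw [← hMr]; nlinarith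
  have hcS : ∀ x : ℝ, q0 ≤ x → c * N ≤ (M + N) * x := fun x hx => by
    have := hcN x hx
    have : 0 < M * x := mul_pos hMp (by linarith)
    nlinarith
  have two : ∀ (m : ℕ) (a : ℝ), c * N ≤ a → |(m:ℝ) - a| ≤ D → 2 ≤ m := fun m a h1 h2 => by
    have := (abs_le.1 h2).1
    have : (2:ℝ) ≤ m := by linarith
    exact_mod_cast this
  have app : ∀ (m : ℕ) (a d : ℝ), (m:ℝ) - a = d → c * N ≤ a → |d| ≤ D →
      |Real.log (m.factorial : ℝ) - FF a d| ≤ E ∧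
      |Real.log ((m-1).factorial : ℝ) - (FF a d - Real.log a)| ≤ E := by
    intro m a d h0 h1 h2
    subst h0
    exact happ a m (two m a h1 h2) hc hc1 hNp h1 h2 hND
  have z : |(0:ℝ)| ≤ D := by simpa using hD0
  have t1 := (app N N 0 (by ring) (by simpa using hcN 1 hq01) z).1
  have t2 := (app M M 0 (by ring) (by simpa using hcM 1 hq01) z).2
  have t3 := (app (M+N) (M+N) 0 (by push_cast; ring) (by simpa using hcS 1 hq01) z).2
  obtain ⟨hPpos, hPlog⟩ := log_PB M n K
  obtain ⟨hGpos, hGlog⟩ := log_G N hN1 n q α hα hq0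
  have hid := main_id (fun i => (q i : ℝ)) (fun i => (n i : ℝ) - N * q i) N M α hNp hMp hMr hq' hqs
    (by rw [Finset.sum_sub_distrib, ← Finset.mul_sum, hqs, ← Nat.cast_sum, hn]; ring)
  rw [← hid] at hGlog
  rw [hn] at hPlog
  have hsum : |∑ i, (Real.log ((K i + n i - 1).factorial : ℝ) - Real.log ((n i).factorial : ℝ)
          - Real.log ((K i - 1).factorial : ℝ)) -
      ∑ i, ((FF ((M+N) * (q i:ℝ)) ((n i : ℝ) - N * q i) - Real.log ((M+N) * (q i:ℝ)))
        - FF (N * (q i:ℝ)) ((n i : ℝ) - N * q i)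
        - (FF (M * (q i:ℝ)) 0 - Real.log (M * (q i:ℝ))))| ≤ r * (3 * E) := by
    rw [← Finset.sum_sub_distrib]
    refine (Finset.abs_sum_le_sum_abs _ _).trans ?_
    have : (r:ℝ) * (3 * E) = ∑ i : Fin r, 3 * E := by simp
    rw [this]
    refine Finset.sum_le_sum fun i _ => ?_
    have s1 := (app (K i + n i) ((M+N) * q i) ((n i : ℝ) - N * q i)
      (by push_cast; rw [hKr i]; ring) (hcS _ (hq0le i)) (hdev i)).2
    have s2 := (app (n i) (N * q i) ((n i : ℝ) - N * q i) rfl (hcN _ (hq0le i)) (hdev i)).1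
    have s3 := (app (K i) (M * q i) 0 (by rw [hKr i]; ring) (hcM _ (hq0le i)) z).2
    rw [abs_le] at s1 s2 s3 ⊢
    clear hid hGlog hPlog t1 t2 t3
    constructor <;> linarith [s1.1, s1.2, s2.1, s2.2, s3.1, s3.2]
  have hEb : E ≤ 4 / c^2 * ((A^3 + A + 1) * (N:ℝ) ^ (-(3*ε))) := by
    rw [hEdef]; gcongr
  have hfin : |Real.log (PB M n K) - Real.log (GaussB N n q α)| ≤ B * (N:ℝ) ^ (-(3*ε)) := by
    have h1 : |Real.log (PB M n K) - Real.log (GaussB N n q α)| ≤ (3 + 3 * r) * E := by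
      rw [hPlog, hGlog]
      push_cast at t3
      rw [abs_le] at t1 t2 t3 hsum ⊢
      constructor <;> linarith [t1.1, t1.2, t2.1, t2.2, t3.1, t3.2, hsum.1, hsum.2]
    refine h1.trans ?_
    calc (3 + 3 * (r:ℝ)) * E ≤ (3 + 3 * r) * (4 / c^2 * ((A^3 + A + 1) * (N:ℝ) ^ (-(3*ε)))) := by
          gcongr
      _ = _ := by rw [hB]; ring
  have hle : (N:ℝ) ^ (-(3*ε)) ≤ 1 := Real.rpow_le_one_of_one_le_of_nonpos hNr (by linarith)
  have := final_exp _ _ _ B hPpos hGpos hfin (by nlinarith)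
  calc _ ≤ _ := this
    _ = _ := by ring
end

section
/- Fix an integer r ≥ 2, rationals q_1,…,q_r ∈ (0,1) with q_1+⋯+q_r = 1, a rational α > 0, a real A > 0 and a real ε with 0 < ε < 1/6. Then there exist C > 0 and N₀ ∈ ℕ such that for every N ≥ N₀ and M ∈ ℕ with α·M = N, every K : Fin r → ℕ with K_i = q_i·M for every i, and every n : Fin r → ℕ with ∑_i n_i = N such that |n_i − N·q_i| > A·N^{2/3−ε} for at least one i, one has P^B(n|K) ≤ C·√N·exp(−A²·N^{1/3−2ε}/(1+α)). -/
open Finset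

lemma aux_choose (k n : ℕ) (y : ℝ) (h0 : 0 < y) (h1 : y < 1) :
    ((n + k).choose k : ℝ) * y ^ n ≤ 1 / (1 - y) ^ (k + 1) := by
  have hn : ‖y‖ < 1 := by rw [Real.norm_eq_abs, abs_of_pos h0]; exact h1
  have hs := summable_choose_mul_geometric_of_norm_lt_one k hn
  rw [← tsum_choose_mul_geometric_of_norm_lt_one k hn]
  exact hs.le_tsum n (fun j _ => by positivity)

lemma aux_mc (K n : ℕ) (hK : 1 ≤ K) (y : ℝ) (h0 : 0 < y) (h1 : y < 1) :
    ((K + n - 1).factorial : ℝ) / ((K - 1).factorial : ℝ) / (n.factorial : ℝ)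
      ≤ (y ^ n)⁻¹ * ((1 - y) ^ K)⁻¹ := by
  obtain ⟨k, rfl⟩ : ∃ k, K = k + 1 := ⟨K - 1, by omega⟩
  have h := aux_choose k n y h0 h1
  have e : ((n + k).choose k : ℝ) = ((k + 1 + n - 1).factorial : ℝ) / ((k + 1 - 1).factorial : ℝ) / (n.factorial : ℝ) := by
    rw [Nat.cast_choose ℝ (by omega : k ≤ n + k)]
    have : k + 1 + n - 1 = n + k := by omega
    rw [this]
    simp only [Nat.add_sub_cancel]
    rw [div_div]
  rw [← e, inv_mul_eq_div, le_div_iff₀ (by positivity), ← one_div]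
  exact h

lemma aux_fact_up (n : ℕ) (hn : 1 ≤ n) :
    (n.factorial : ℝ) ≤ Real.exp 1 * n * ((n : ℝ) ^ n * Real.exp (-n)) := by
  induction n, hn using Nat.le_induction with
  | base => simp [← Real.exp_add]
  | succ n hn ih =>
    have hn' : (0 : ℝ) < n := by exact_mod_cast hn
    have h1 : Real.exp 1 ≤ ((n + 1 : ℝ) / n) ^ (n + 1) := by
      have h2 : 1 - ((n + 1 : ℝ) / n)⁻¹ ≤ Real.log ((n + 1 : ℝ) / n) :=
        Real.one_sub_inv_le_log_of_pos (by positivity)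
      have h3 : (1 : ℝ) ≤ (n + 1 : ℕ) * Real.log ((n + 1 : ℝ) / n) := by
        have : 1 - ((n + 1 : ℝ) / n)⁻¹ = 1 / (n + 1) := by field_simp; ring
        rw [this] at h2
        rw [div_le_iff₀ (by positivity)] at h2
        push_cast; linarith
      rw [← Real.log_pow] at h3
      exact (Real.le_log_iff_exp_le (by positivity)).1 h3
    rw [div_pow, le_div_iff₀ (by positivity)] at h1
    rw [Nat.factorial_succ]
    push_cast
    have e1 : Real.exp (-(n : ℝ)) = Real.exp 1 * Real.exp (-((n : ℝ) + 1)) := by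
      rw [← Real.exp_add]; congr 1; ring
    rw [e1] at ih
    calc ((n : ℝ) + 1) * n.factorial ≤ (n + 1) * (Real.exp 1 * n * ((n : ℝ) ^ n * (Real.exp 1 * Real.exp (-((n : ℝ) + 1))))) := by gcongr
      _ = Real.exp 1 * (n + 1) * Real.exp (-((n : ℝ) + 1)) * (Real.exp 1 * (n : ℝ) ^ (n + 1)) := by ring
      _ ≤ Real.exp 1 * (n + 1) * Real.exp (-((n : ℝ) + 1)) * ((n + 1 : ℝ) ^ (n + 1)) := by gcongr
      _ = _ := by ring

lemma aux_fact_low (n : ℕ) : (n : ℝ) ^ n * Real.exp (-n) ≤ (n.factorial : ℝ) := by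
  have h := Real.pow_div_factorial_le_exp (n : ℝ) (by positivity) n
  rw [div_le_iff₀ (by positivity)] at h
  rw [Real.exp_neg, ← div_eq_mul_inv, div_le_iff₀ (Real.exp_pos _)]
  linarith

/-- denominator bound -/
lemma aux_den (N M : ℕ) (hN : 1 ≤ N) (hM : 1 ≤ M) :
    (N.factorial : ℝ) * (((M - 1).factorial : ℝ) / ((M + N - 1).factorial : ℝ)) ≤
      Real.exp 1 ^ 2 * N * (M + N) *
        (((N : ℝ) / (M + N)) ^ N * ((M : ℝ) / (M + N)) ^ M) := by
  obtain ⟨m, rfl⟩ : ∃ m, M = m + 1 := ⟨M - 1, by omega⟩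
  have a1 := aux_fact_up N hN
  have a2 := aux_fact_up (m + 1) hM
  have a3 := aux_fact_low (m + 1 + N)
  have e : m + 1 + N - 1 = m + N := by omega
  have f1 : ((m + 1 + N).factorial : ℝ) = ((m + 1 : ℕ) + N : ℝ) * (m + N).factorial := by
    rw [show m + 1 + N = (m + N) + 1 by omega, Nat.factorial_succ]; push_cast; ring
  have f2 : ((m + 1).factorial : ℝ) = ((m + 1 : ℕ) : ℝ) * m.factorial := by
    rw [Nat.factorial_succ]; push_cast; ring
  rw [e, Nat.add_sub_cancel]
  have hM0 : (0 : ℝ) < (m + 1 : ℕ) := by positivity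
  have hN0 : (0 : ℝ) < N := by exact_mod_cast hN
  have k1 : (N.factorial : ℝ) * ((m.factorial : ℝ) / ((m + N).factorial : ℝ)) =
      (N.factorial : ℝ) * ((m + 1).factorial : ℝ) / ((m + 1 + N).factorial : ℝ) *
        ((((m + 1 : ℕ) : ℝ) + N) / (m + 1 : ℕ)) := by
    rw [f1, f2]; field_simp
  rw [k1]
  generalize m + 1 = M at *
  have k2 : (N.factorial : ℝ) * (M.factorial : ℝ) / ((M + N).factorial : ℝ) ≤
      (Real.exp 1 * N * ((N : ℝ) ^ N * Real.exp (-N))) *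
      (Real.exp 1 * M * ((M : ℝ) ^ M * Real.exp (-M))) /
       (((M + N : ℕ) : ℝ) ^ (M + N) * Real.exp (-(M + N : ℕ))) := by
    gcongr
  refine (mul_le_mul_of_nonneg_right k2 (by positivity)).trans (le_of_eq ?_)
  have : Real.exp (-((M + N : ℕ) : ℝ)) = Real.exp (-N) * Real.exp (-M) := by
    rw [← Real.exp_add]; congr 1; push_cast; ring
  rw [this]
  have := Real.exp_pos (-(N : ℝ))
  have := Real.exp_pos (-(M : ℝ))
  push_cast
  rw [div_pow, div_pow, pow_add]
  field_simp

lemma aux_local (α : ℝ) (hα : 0 < α) : ∀ᶠ s in nhds (0 : ℝ),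
    Real.exp (-α * s - (3 / 4 * α * (1 + α)) * s ^ 2) ≤ 1 - α * (Real.exp s - 1) := by
  set β := 3 / 4 * α * (1 + α) with hβ
  let f : ℝ → ℝ := fun s => 1 - α * (Real.exp s - 1) - Real.exp (-α * s - β * s ^ 2)
  have hd : ∀ s, HasDerivAt f (-(α * Real.exp s) -
      Real.exp (-α * s - β * s ^ 2) * (-α - β * (2 * s))) s := by
    intro s
    have h1 : HasDerivAt (fun s : ℝ => 1 - α * (Real.exp s - 1)) (-(α * Real.exp s)) s :=
      (((Real.hasDerivAt_exp s).sub_const 1).const_mul α).const_sub 1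
    have h2 : HasDerivAt (fun s : ℝ => -α * s - β * s ^ 2) (-α - β * (2 * s)) s := by
      have := ((hasDerivAt_id s).const_mul (-α)).sub ((hasDerivAt_pow 2 s).const_mul β)
      refine this.congr_deriv ?_
      simp
    exact h1.sub h2.exp
  have hdf : deriv f = fun s => -(α * Real.exp s) -
      Real.exp (-α * s - β * s ^ 2) * (-α - β * (2 * s)) := funext fun s => (hd s).deriv
  have hdd : HasDerivAt (deriv f) (α * (1 + α) / 2) 0 := by
    rw [hdf]
    have h1 : HasDerivAt (fun s : ℝ => -(α * Real.exp s)) (-(α * Real.exp 0)) 0 :=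
      ((Real.hasDerivAt_exp 0).const_mul α).neg
    have h2 : HasDerivAt (fun s : ℝ => -α * s - β * s ^ 2) (-α - β * (2 * 0)) 0 := by
      have := ((hasDerivAt_id (0:ℝ)).const_mul (-α)).sub ((hasDerivAt_pow 2 (0:ℝ)).const_mul β)
      refine this.congr_deriv ?_
      simp
    have h3 : HasDerivAt (fun s : ℝ => -α - β * (2 * s)) (-(β * (2 * 1))) 0 :=
      (((hasDerivAt_id (0:ℝ)).const_mul 2).const_mul β).const_sub (-α)
    have h4 := h1.sub (h2.exp.mul h3)
    refine h4.congr_deriv ?_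
    simp [hβ]; ring
  have hmin : IsLocalMin f 0 := by
    apply isLocalMin_of_deriv_deriv_pos
    · rw [hdd.deriv]; positivity
    · rw [hdf]; simp
    · exact (hd 0).continuousAt
  have h0 : f 0 = 0 := by simp [f]
  filter_upwards [hmin] with s hs
  rw [h0] at hs
  simp only [f] at hs
  linarith

lemma aux_PB {r : ℕ} (M N : ℕ) (n K : Fin r → ℕ) (q : Fin r → ℝ) (α : ℝ) (hα : 0 < α)
    (hN : 1 ≤ N) (hM : 1 ≤ M) (hαM : α * M = N) (hq0 : ∀ i, 0 < q i) (hq1 : ∀ i, q i < 1)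
    (hqs : ∑ i, q i = 1) (hK : ∀ i, (K i : ℝ) = q i * M) (hn : ∑ i, n i = N)
    (i : Fin r) (u : ℝ)
    (hu : ∀ s, |s| ≤ |u| → Real.exp (-α * s - (3 / 4 * α * (1 + α)) * s ^ 2) ≤ 1 - α * (Real.exp s - 1)) :
    PB M n K ≤ Real.exp 1 ^ 2 * N * (M + N) *
      Real.exp (-u * (n i - N * q i) + 3 / 16 * (1 + α) * N * u ^ 2) := by
  set β := 3 / 4 * α * (1 + α) with hβ
  have hM0 : (0 : ℝ) < M := by exact_mod_cast hM
  have hN0 : (0 : ℝ) < N := by exact_mod_cast hN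
  set x : ℝ := (N : ℝ) / (M + N) with hx
  set z : ℝ := (M : ℝ) / (M + N) with hz
  have hx0 : 0 < x := by positivity
  have hz0 : 0 < z := by positivity
  have hxz : x = α * z := by rw [hx, hz, ← hαM]; ring
  have hxz1 : x + z = 1 := by rw [hx, hz]; field_simp; ring
  let s : Fin r → ℝ := fun j => ((if j = i then 1 else 0) - q i) * u
  have hs : ∀ j, |s j| ≤ |u| := by
    intro j
    simp only [s, abs_mul]
    have : |(if j = i then (1:ℝ) else 0) - q i| ≤ 1 := by
      have := hq0 i; have := hq1 i
      rw [abs_le]; split_ifs <;> constructor <;> linarith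
    nlinarith [abs_nonneg u]
  have hK1 : ∀ j, 1 ≤ K j := by
    intro j
    have : (0 : ℝ) < K j := by rw [hK]; exact mul_pos (hq0 j) hM0
    exact_mod_cast this
  have hKs : ∑ j, K j = M := by
    have : ((∑ j, K j : ℕ) : ℝ) = M := by
      push_cast; simp_rw [hK]; rw [← Finset.sum_mul, hqs, one_mul]
    exact_mod_cast this
  have key : ∀ j, ((K j + n j - 1).factorial : ℝ) / ((K j - 1).factorial : ℝ) / ((n j).factorial : ℝ)
      ≤ (x ^ n j)⁻¹ * (z ^ K j)⁻¹ * Real.exp (-(s j) * n j + K j * (α * s j + β * s j ^ 2)) := by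
    intro j
    have h := hu (s j) (hs j)
    have hpos := Real.exp_pos (-α * s j - β * s j ^ 2)
    have hy : 1 - x * Real.exp (s j) = z * (1 - α * (Real.exp (s j) - 1)) := by
      have : (1:ℝ) = α * z + z := by rw [← hxz, hxz1]
      rw [hxz]; linear_combination this
    have hy0 : 0 < 1 - x * Real.exp (s j) := by
      rw [hy]; exact mul_pos hz0 (by linarith)
    refine (aux_mc (K j) (n j) (hK1 j) (x * Real.exp (s j)) (by positivity) (by linarith)).trans ?_
    have hlow : z ^ K j * Real.exp (-α * s j - β * s j ^ 2) ^ K j ≤ (1 - x * Real.exp (s j)) ^ K j := by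
      rw [hy, ← mul_pow]
      gcongr
    calc ((x * Real.exp (s j)) ^ n j)⁻¹ * ((1 - x * Real.exp (s j)) ^ K j)⁻¹
        ≤ ((x * Real.exp (s j)) ^ n j)⁻¹ * (z ^ K j * Real.exp (-α * s j - β * s j ^ 2) ^ K j)⁻¹ := by
          gcongr
      _ = _ := by
        rw [mul_pow, mul_inv, mul_inv, ← Real.exp_nat_mul, ← Real.exp_nat_mul, ← Real.exp_neg, ← Real.exp_neg]
        have : Real.exp (-(s j) * n j + K j * (α * s j + β * s j ^ 2)) =
          Real.exp (-(n j * s j)) * Real.exp (-(K j * (-α * s j - β * s j ^ 2))) := by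
          rw [← Real.exp_add]; congr 1; ring
        rw [this]; ring
  have hprod : ∏ j, (((K j + n j - 1).factorial : ℝ) / ((K j - 1).factorial : ℝ) / ((n j).factorial : ℝ))
      ≤ (x ^ N)⁻¹ * (z ^ M)⁻¹ * Real.exp (∑ j, (-(s j) * n j + K j * (α * s j + β * s j ^ 2))) := by
    refine (Finset.prod_le_prod (fun j _ => by positivity) (fun j _ => key j)).trans (le_of_eq ?_)
    rw [Finset.prod_mul_distrib, Finset.prod_mul_distrib, Finset.prod_inv_distrib,
      Finset.prod_inv_distrib, Finset.prod_pow_eq_pow_sum, Finset.prod_pow_eq_pow_sum, hn, hKs,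
      Real.exp_sum]
  have hnR : ∑ j, (n j : ℝ) = N := by exact_mod_cast hn
  have hsum : ∑ j, (-(s j) * n j + K j * (α * s j + β * s j ^ 2)) =
      -u * (n i - N * q i) + β * M * (q i * (1 - q i)) * u ^ 2 := by
    have e : ∀ j, (-(s j) * n j + K j * (α * s j + β * s j ^ 2)) =
        (if j = i then -u * n j + M * q j * (α * u + β * (1 - 2 * q i) * u ^ 2) else 0)
        + u * q i * n j + (M * (- α * q i * u + β * q i ^ 2 * u ^ 2)) * q j := by
      intro j
      simp only [s, hK]
      split_ifs <;> ring
    rw [Finset.sum_congr rfl (fun j _ => e j), Finset.sum_add_distrib, Finset.sum_add_distrib,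
      ← Finset.mul_sum, ← Finset.mul_sum, hqs, hnR]
    simp
    ring
  have hle : β * M * (q i * (1 - q i)) * u ^ 2 ≤ 3 / 16 * (1 + α) * N * u ^ 2 := by
    have : q i * (1 - q i) ≤ 1 / 4 := by nlinarith [sq_nonneg (q i - 1 / 2)]
    calc β * M * (q i * (1 - q i)) * u ^ 2 ≤ β * M * (1 / 4) * u ^ 2 := by gcongr
      _ = _ := by rw [hβ, ← hαM]; ring
  have hden := aux_den N M hN hM
  rw [← hx, ← hz] at hden
  have hPB : PB M n K = ((N.factorial : ℝ) * (((M - 1).factorial : ℝ) / ((M + N - 1).factorial : ℝ))) *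
      ∏ j, (((K j + n j - 1).factorial : ℝ) / ((K j - 1).factorial : ℝ) / ((n j).factorial : ℝ)) := by
    rw [PB, hn, Finset.prod_div_distrib (f := fun j => ((K j + n j - 1).factorial : ℝ) / ((K j - 1).factorial : ℝ))]
    ring
  rw [hPB]
  calc _ ≤ (Real.exp 1 ^ 2 * N * (M + N) * (x ^ N * z ^ M)) *
        ((x ^ N)⁻¹ * (z ^ M)⁻¹ * Real.exp (∑ j, (-(s j) * n j + K j * (α * s j + β * s j ^ 2)))) := by
        apply mul_le_mul hden hprod (Finset.prod_nonneg fun j _ => by positivity) (by positivity)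
    _ = Real.exp 1 ^ 2 * N * (M + N) * Real.exp (∑ j, (-(s j) * n j + K j * (α * s j + β * s j ^ 2))) := by
        generalize Real.exp (∑ j, (-(s j) * n j + K j * (α * s j + β * s j ^ 2))) = W
        field_simp
    _ ≤ _ := by
        rw [hsum]
        gcongr

/-- Tail bound for bosons at fixed density `α = N/M`: any count vector violating
the central-region condition `|nᵢ - N qᵢ| ≤ A N^(2/3-ε)` for some `i` has
average probability at most `C √N exp(-A² N^(1/3-2ε)/(1+α))`. -/
theorem tail_bound_bosons
    (r : ℕ) (hr : 2 ≤ r) (q : Fin r → ℚ)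
    (hq0 : ∀ i, 0 < q i) (hq1 : ∀ i, q i < 1) (hqsum : ∑ i, q i = 1)
    (α : ℚ) (hα : 0 < α)
    (A ε : ℝ) (hA : 0 < A) (hε0 : 0 < ε) (hε1 : ε < 1 / 6) :
    ∃ C > 0, ∃ N₀ : ℕ, ∀ N : ℕ, N₀ ≤ N → ∀ M : ℕ, α * M = N →
      ∀ K : Fin r → ℕ, (∀ i, (K i : ℚ) = q i * M) →
      ∀ n : Fin r → ℕ, ∑ i, n i = N →
      (∃ i, A * (N : ℝ) ^ ((2 : ℝ) / 3 - ε) < |(n i : ℝ) - (N : ℝ) * (q i : ℝ)|) →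
      PB M n K ≤ C * Real.sqrt N *
        Real.exp (-(A ^ 2) * (N : ℝ) ^ ((1 : ℝ) / 3 - 2 * ε) / (1 + (α : ℝ))) := by
  have hαR : (0 : ℝ) < (α : ℝ) := by exact_mod_cast hα
  have hγ : 0 < (1 : ℝ) / 3 - 2 * ε := by linarith
  set a : ℝ := (α : ℝ) with ha
  -- eventual facts
  have E1 : ∀ᶠ N : ℕ in Filter.atTop, ∀ s : ℝ,
      |s| ≤ 2 * A / (1 + a) * (N : ℝ) ^ (-((1 : ℝ) / 3 + ε)) →
      Real.exp (-a * s - (3 / 4 * a * (1 + a)) * s ^ 2) ≤ 1 - a * (Real.exp s - 1) := by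
    obtain ⟨t, ht, hts⟩ := Metric.eventually_nhds_iff.1 (aux_local a hαR)
    have h1 : Filter.Tendsto (fun N : ℕ => 2 * A / (1 + a) * (N : ℝ) ^ (-((1 : ℝ) / 3 + ε)))
        Filter.atTop (nhds (2 * A / (1 + a) * 0)) :=
      ((tendsto_rpow_neg_atTop (by positivity : 0 < (1 : ℝ) / 3 + ε)).comp
        tendsto_natCast_atTop_atTop).const_mul _
    rw [mul_zero] at h1
    filter_upwards [h1.eventually (gt_mem_nhds ht)] with N hN s hs
    apply hts
    rw [Real.dist_eq, sub_zero]
    linarith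
  have E2 : ∀ᶠ N : ℕ in Filter.atTop,
      (N : ℝ) ^ 2 * Real.exp (-(A ^ 2 / (4 * (1 + a))) * (N : ℝ) ^ ((1 : ℝ) / 3 - 2 * ε)) ≤ 1 := by
    have h1 := tendsto_rpow_mul_exp_neg_mul_atTop_nhds_zero (2 / ((1 : ℝ) / 3 - 2 * ε))
      (A ^ 2 / (4 * (1 + a))) (by positivity)
    have h2 := h1.comp ((tendsto_rpow_atTop hγ).comp tendsto_natCast_atTop_atTop)
    filter_upwards [h2.eventually (gt_mem_nhds one_pos)] with N hN
    simp only [Function.comp_apply] at hN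
    rw [← Real.rpow_mul (by positivity), mul_div_cancel₀ _ hγ.ne'] at hN
    rw [Real.rpow_two] at hN
    exact hN.le
  obtain ⟨N₀, hN₀⟩ := Filter.eventually_atTop.1 (E1.and E2)
  refine ⟨Real.exp 1 ^ 2 * (1 / a + 1), by positivity, max N₀ 1, ?_⟩
  intro N hN M hM K hK n hn ⟨i, hi⟩
  obtain ⟨e1, e2⟩ := hN₀ N ((le_max_left _ _).trans hN)
  have hN1 : 1 ≤ N := (le_max_right _ _).trans hN
  have hNR : (1 : ℝ) ≤ N := by exact_mod_cast hN1
  have hN0 : (0 : ℝ) < N := by linarith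
  have hMR : a * M = N := by rw [ha]; exact_mod_cast hM
  have hM1 : 1 ≤ M := by
    rcases Nat.eq_zero_or_pos M with h | h
    · rw [h] at hMR; simp at hMR; linarith
    · exact h
  set D : ℝ := (n i : ℝ) - (N : ℝ) * (q i : ℝ) with hD
  set δ : ℝ := A * (N : ℝ) ^ ((2 : ℝ) / 3 - ε) with hδ
  have hδ0 : 0 < δ := by positivity
  have hpow : (N : ℝ) ^ ((2 : ℝ) / 3 - ε) / N = (N : ℝ) ^ (-((1 : ℝ) / 3 + ε)) := by
    rw [← Real.rpow_sub_one hN0.ne']; congr 1; ring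
  have hsq : δ ^ 2 / N = A ^ 2 * (N : ℝ) ^ ((1 : ℝ) / 3 - 2 * ε) := by
    rw [hδ, mul_pow, mul_div_assoc, ← Real.rpow_natCast (_ ^ (_ : ℝ)) 2, ← Real.rpow_mul hN0.le,
      ← Real.rpow_sub_one hN0.ne']
    congr 2; push_cast; ring
  set v : ℝ := 2 * δ / ((1 + a) * N) with hv
  have hv0 : 0 < v := by positivity
  have hveq : v = 2 * A / (1 + a) * (N : ℝ) ^ (-((1 : ℝ) / 3 + ε)) := by
    rw [← hpow, hv, hδ]; field_simp
  obtain ⟨u, hu, huD⟩ : ∃ u : ℝ, |u| = v ∧ u * D = v * |D| := by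
    rcases le_total 0 D with h | h
    · exact ⟨v, abs_of_pos hv0, by rw [abs_of_nonneg h]⟩
    · exact ⟨-v, by rw [abs_neg, abs_of_pos hv0], by rw [abs_of_nonpos h]; ring⟩
  have main := aux_PB M N n K (fun j => (q j : ℝ)) a hαR hN1 hM1 hMR
    (fun j => by exact_mod_cast hq0 j) (fun j => by exact_mod_cast hq1 j)
    (by exact_mod_cast hqsum) (fun j => by exact_mod_cast hK j) hn i u
    (fun s hs => e1 s (by rw [← hveq, ← hu]; exact hs))
  refine main.trans ?_
  have hu2 : u ^ 2 = v ^ 2 := by rw [← hu, sq_abs]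
  have hexp : -u * ((n i : ℝ) - N * (q i : ℝ)) + 3 / 16 * (1 + a) * N * u ^ 2 ≤
      -(A ^ 2 / (4 * (1 + a))) * (N : ℝ) ^ ((1 : ℝ) / 3 - 2 * ε) +
      -(A ^ 2) * (N : ℝ) ^ ((1 : ℝ) / 3 - 2 * ε) / (1 + a) := by
    rw [← hD, hu2, neg_mul, huD]
    have h1 : v * δ ≤ v * |D| := by gcongr
    have h2 : -(v * δ) + 3 / 16 * (1 + a) * N * v ^ 2 = -(5 / 4) * (δ ^ 2 / N) / (1 + a) := by
      rw [hv]; field_simp; ring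
    rw [hsq] at h2
    have h3 : -(A ^ 2 / (4 * (1 + a))) * (N : ℝ) ^ ((1 : ℝ) / 3 - 2 * ε) +
      -(A ^ 2) * (N : ℝ) ^ ((1 : ℝ) / 3 - 2 * ε) / (1 + a) =
      -(5 / 4) * (A ^ 2 * (N : ℝ) ^ ((1 : ℝ) / 3 - 2 * ε)) / (1 + a) := by
      field_simp; ring
    rw [h3, ← h2]
    linarith
  have hMa : (M : ℝ) = 1 / a * N := by rw [← hMR]; field_simp
  have hsqrt : 1 ≤ Real.sqrt N := Real.one_le_sqrt.2 hNR
  set X := Real.exp (-(A ^ 2 / (4 * (1 + a))) * (N : ℝ) ^ ((1 : ℝ) / 3 - 2 * ε)) with hX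
  set Y := Real.exp (-(A ^ 2) * (N : ℝ) ^ ((1 : ℝ) / 3 - 2 * ε) / (1 + a)) with hY
  have hY0 : 0 < Y := Real.exp_pos _
  calc _ ≤ Real.exp 1 ^ 2 * N * (M + N) * (X * Y) := by
        rw [hX, hY, ← Real.exp_add]; gcongr
    _ = Real.exp 1 ^ 2 * (1 / a + 1) * ((N : ℝ) ^ 2 * X) * Y := by rw [hMa]; ring
    _ ≤ Real.exp 1 ^ 2 * (1 / a + 1) * Real.sqrt N * Y := by
        gcongr; linarith
end

section
/- Let M ≥ 1 and N ≥ 1 be natural numbers, let U be Haar-distributed on the unitary group U(M) (the group of M×M complex unitary matrices with its Haar probability measure), and let k, k', l : Fin N → Fin M be index tuples. For an M×M matrix U define the N×N matrices A(U)_{ij} = U_{k_i, l_j} and B(U)_{ij} = U_{k'_i, l_j}, and let per denote the permanent, per(A) = ∑_{σ ∈ S_N} ∏_{i} A_{i, σ(i)}. Let n_p = #{i : k_i = p}, m_p = #{i : k'_i = p} and s_p = #{j : l_j = p} for p ∈ Fin M. Then ∫ per(A(U)) · conj(per(B(U))) dU equals (∏_p n_p!) · (∏_p s_p!) · N! ·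 (M−1)!/(M+N−1)! if n_p = m_p for all p, and equals 0 otherwise. -/
open MeasureTheory Finset

/-- The permanent of an `N × N` complex matrix: `per A = ∑_{σ ∈ S_N} ∏ᵢ A_{i,σ(i)}`. -/
noncomputable def perm {N : ℕ} (A : Matrix (Fin N) (Fin N) ℂ) : ℂ :=
  ∑ σ : Equiv.Perm (Fin N), ∏ i, A i (σ i)

noncomputable def ty {N M : ℕ} (k : Fin N → Fin M) : Fin M →₀ ℕ := ∑ i, Finsupp.single (k i) 1

lemma ty_apply {N M : ℕ} (k : Fin N → Fin M) (p) : ty k p = #{i | k i = p} := by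
  simp [ty, Finsupp.finsetSum_apply, Finsupp.single_apply, Finset.sum_boole]

lemma ty_comp {N M : ℕ} (k : Fin N → Fin M) (σ : Equiv.Perm (Fin N)) : ty (k ∘ σ) = ty k := by
  simp only [ty, Function.comp]
  exact Equiv.sum_comp σ (fun i => Finsupp.single (k i) 1)

lemma ty_exists {N M : ℕ} {k k' : Fin N → Fin M} (h : ty k = ty k') :
    ∃ σ : Equiv.Perm (Fin N), k' = k ∘ σ := by
  have h2 : ∀ p, Nonempty ({i // k' i = p} ≃ {i // k i = p}) := by
    intro p
    refine ⟨Fintype.equivOfCardEq ?_⟩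
    have := DFunLike.congr_fun h p
    simp only [ty_apply] at this
    simp only [Fintype.card_subtype]
    exact this.symm
  let e := fun p => (h2 p).some
  refine ⟨Equiv.ofFiberEquiv e, ?_⟩
  funext i
  exact (Equiv.ofFiberEquiv_map e i).symm

lemma card_cls {N M : ℕ} (k : Fin N → Fin M) :
    #{k' : Fin N → Fin M | ty k' = ty k} * ∏ p, (#{i | k i = p}).factorial = N.factorial := by
  classical
  have h1 : Fintype.card (Equiv.Perm (Fin N)) = N.factorial := by
    simp [Fintype.card_perm]
  rw [← h1, ← Finset.card_univ,
    Finset.card_eq_sum_card_fiberwise (f := fun σ : Equiv.Perm (Fin N) => k ∘ σ)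
      (t := {k' : Fin N → Fin M | ty k' = ty k}) (by intro σ _; simp [ty_comp])]
  rw [← smul_eq_mul, ← Finset.sum_const]
  refine Finset.sum_congr rfl fun k' hk' => ?_
  have hk : ty k' = ty k := by simpa using hk'
  obtain ⟨τ, rfl⟩ := ty_exists hk.symm
  have h2 := DomMulAct.stabilizer_card k
  simp only [Fintype.card_subtype] at h2
  rw [← h2]
  refine Finset.card_bij (fun σ _ => σ * τ) ?_ ?_ ?_
  · intro σ hσ
    simp only [mem_filter, mem_univ, true_and] at hσ ⊢
    rw [Equiv.Perm.coe_mul, ← Function.comp_assoc, hσ]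
  · intro a _ b _ h
    exact mul_right_cancel h
  · intro b hb
    simp only [mem_filter, mem_univ, true_and] at hb
    refine ⟨b * τ⁻¹, ?_, by simp⟩
    simp only [mem_filter, mem_univ, true_and]
    rw [Equiv.Perm.coe_mul, ← Function.comp_assoc, hb, Function.comp_assoc, ← Equiv.Perm.coe_mul]
    simp

lemma card_cls_ne {N M : ℕ} (k : Fin N → Fin M) :
    (#{k' : Fin N → Fin M | ty k' = ty k} : ℂ) ≠ 0 := by
  have h : k ∈ ({k' : Fin N → Fin M | ty k' = ty k} : Finset _) := by simp
  exact_mod_cast (Finset.card_pos.2 ⟨k, h⟩).ne'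

lemma fact_div {N M : ℕ} (k : Fin N → Fin M) :
    (∏ p, ((#{i | k i = p}).factorial : ℂ)) / (N.factorial : ℂ)
      = (#{k' : Fin N → Fin M | ty k' = ty k} : ℂ)⁻¹ := by
  have h := card_cls_ne k
  have h2 : (N.factorial : ℂ) ≠ 0 := by exact_mod_cast N.factorial_ne_zero
  have h3 : (#{k' : Fin N → Fin M | ty k' = ty k} : ℂ) * ∏ p, ((#{i | k i = p}).factorial : ℂ)
      = N.factorial := by exact_mod_cast card_cls k
  rw [← h3] at h2 ⊢
  have h4 := right_ne_zero_of_mul h2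
  field_simp

lemma sum_cls (N M : ℕ) :
    ∑ l : Fin N → Fin M, (#{k' : Fin N → Fin M | ty k' = ty l} : ℂ)⁻¹
      = ((M + N - 1).choose N : ℂ) := by
  classical
  have h := card_finsuppAntidiag_nat_eq_choose (s := (univ : Finset (Fin M))) N
  rw [Finset.card_univ, Fintype.card_fin] at h
  rw [← h, ← Finset.sum_fiberwise_of_maps_to (g := ty)
    (t := (univ : Finset (Fin M)).finsuppAntidiag N)]
  · rw [Finset.card_eq_sum_ones, Nat.cast_sum]
    refine Finset.sum_congr rfl fun f hf => ?_
    have hf' : ∑ p, f p = N := by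
      rw [mem_finsuppAntidiag] at hf
      exact hf.1
    have e : Fin N ≃ Σ p, Fin (f p) := Fintype.equivOfCardEq (by simp [hf'])
    have hl : ty (fun i => (e i).1) = f := by
      ext p
      rw [ty_apply]
      have : Fintype.card {x : Σ p, Fin (f p) // x.1 = p} = f p := by
        rw [Fintype.card_congr (Equiv.sigmaSubtype p)]; simp
      rw [← Fintype.card_subtype, ← this]
      refine Fintype.card_congr (e.subtypeEquiv ?_)
      intro a; rfl
    have h1 : ∀ l ∈ ({l | ty l = f} : Finset (Fin N → Fin M)),
        (#{k' : Fin N → Fin M | ty k' = ty l} : ℂ)⁻¹ = (#{k' : Fin N → Fin M | ty k' = f} : ℂ)⁻¹ := by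
      intro l hl
      have : ty l = f := by simpa using hl
      rw [this]
    rw [Finset.sum_congr rfl h1, Finset.sum_const, nsmul_eq_mul, mul_inv_cancel₀]
    · simp
    · rw [← hl]; exact card_cls_ne _
  · intro l _
    rw [mem_finsuppAntidiag]
    refine ⟨?_, by simp⟩
    simp only [ty_apply]
    rw [← Finset.card_eq_sum_card_fiberwise (by simp)]
    simp

lemma lemA {N M : ℕ} (hM : 1 ≤ M) (Φ : (Fin N → Fin M) → (Fin N → Fin M) → ℂ) (c : ℂ)
    (hs1 : ∀ k k' (σ : Equiv.Perm (Fin N)), Φ (k ∘ σ) k' = Φ k k')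
    (hs2 : ∀ k k' (σ : Equiv.Perm (Fin N)), Φ k (k' ∘ σ) = Φ k k')
    (h0 : ∀ k k', ty k ≠ ty k' → Φ k k' = 0)
    (hG : ∀ x : Fin M → ℝ, ∑ p, x p ^ 2 = 1 →
      ∑ k, ∑ k', (∏ i, (x (k i) : ℂ)) * (∏ i, (x (k' i) : ℂ)) * Φ k k' = c)
    (k k' : Fin N → Fin M) :
    Φ k k' = if ty k = ty k' then c * (#{k' : Fin N → Fin M | ty k' = ty k} : ℂ)⁻¹ else 0 := by
  classical
  have hΦ : ∀ a b a' b', ty a = ty b → ty a' = ty b' → Φ a a' = Φ b b' := by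
    intro a b a' b' h h'
    obtain ⟨σ, rfl⟩ := ty_exists h
    obtain ⟨τ, rfl⟩ := ty_exists h'
    rw [hs1, hs2]
  split_ifs with h
  swap
  · exact h0 _ _ h
  rw [← hΦ k k k k' rfl h]
  have hprod : ∀ (t : Fin M → ℂ) (k k' : Fin N → Fin M), ty k = ty k' →
      ∏ i, t (k i) = ∏ i, t (k' i) := by
    intro t a b h
    obtain ⟨σ, rfl⟩ := ty_exists h
    exact (Equiv.prod_comp σ (fun i => t (a i))).symm
  -- reduce double sum
  have hred : ∀ x : Fin M → ℝ,
      ∑ k, ∑ k', (∏ i, (x (k i) : ℂ)) * (∏ i, (x (k' i) : ℂ)) * Φ k k'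
      = ∑ k : Fin N → Fin M, (#{k' : Fin N → Fin M | ty k' = ty k} : ℂ) * Φ k k *
          ∏ i, ((x (k i) : ℂ) ^ 2) := by
    intro x
    refine Finset.sum_congr rfl fun a _ => ?_
    have : ∀ b, (∏ i, (x (a i) : ℂ)) * (∏ i, (x (b i) : ℂ)) * Φ a b =
        if ty b = ty a then Φ a a * ∏ i, ((x (a i) : ℂ) ^ 2) else 0 := by
      intro b
      split_ifs with hb
      · rw [hprod (fun p => (x p : ℂ)) b a hb, hΦ a a b a rfl hb, Finset.prod_pow]; ring
      · rw [h0 a b (fun h => hb h.symm), mul_zero]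
    rw [Finset.sum_congr rfl (fun b _ => this b), ← Finset.sum_filter, Finset.sum_const,
      nsmul_eq_mul, mul_assoc]
  let P : MvPolynomial (Fin M) ℂ := ∑ a : Fin N → Fin M,
    MvPolynomial.monomial (ty a) ((#{k' : Fin N → Fin M | ty k' = ty a} : ℂ) * Φ a a - c)
  have hmon : ∀ (t : Fin M → ℂ) (a : Fin N → Fin M) (r : ℂ),
      MvPolynomial.eval t (MvPolynomial.monomial (ty a) r) = r * ∏ i, t (a i) := by
    intro t a r
    have : MvPolynomial.monomial (ty a) r = MvPolynomial.C r * ∏ i, MvPolynomial.X (a i) := by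
      rw [MvPolynomial.monomial_eq]
      congr 1
      rw [Finsupp.prod_fintype _ _ (by simp)]
      simp only [ty_apply]
      rw [← Finset.prod_fiberwise univ a]
      refine Finset.prod_congr rfl fun p _ => ?_
      rw [Finset.prod_congr rfl (g := fun _ => MvPolynomial.X p)]
      · simp
      · intro i hi; rw [(mem_filter.1 hi).2]
    rw [this]; simp
  have hP : P = 0 := by
    refine MvPolynomial.funext_set (fun _ => (fun r : ℝ => (r : ℂ)) '' Set.Ioi 0) ?_ ?_
    · intro _
      exact (Set.Ioi_infinite (0 : ℝ)).image (Complex.ofReal_injective.injOn)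
    · intro t ht
      have ht' : ∀ p, ∃ r : ℝ, 0 < r ∧ (r : ℂ) = t p := by
        intro p
        obtain ⟨r, hr, h⟩ := ht p trivial
        exact ⟨r, hr, h⟩
      choose r hr hrt using ht'
      simp only [P, map_sum, hmon, map_zero, sub_mul, Finset.sum_sub_distrib, ← Finset.mul_sum]
      rw [← Fintype.sum_pow]
      set S : ℝ := ∑ p, r p with hS
      have hSpos : 0 < S := Finset.sum_pos (fun p _ => hr p) ⟨⟨0, hM⟩, mem_univ _⟩
      have h1 := hG (fun p => √(r p / S)) (by
        rw [Finset.sum_congr rfl (fun p _ => Real.sq_sqrt (div_nonneg (hr p).le hSpos.le)),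
          ← Finset.sum_div, div_self hSpos.ne'])
      rw [hred (fun p => √(r p / S))] at h1
      have h2 : ∀ p, ((√(r p / S) : ℝ) : ℂ) ^ 2 = t p / S := by
        intro p
        rw [← hrt, ← Complex.ofReal_pow, Real.sq_sqrt (div_nonneg (hr p).le hSpos.le)]
        push_cast; rfl
      have hSC : (S : ℂ) ≠ 0 := by exact_mod_cast hSpos.ne'
      have h3 : (∑ p, t p) = (S : ℂ) := by
        rw [hS]; push_cast; simp only [hrt]
      simp only [h2, Finset.prod_div_distrib, Finset.prod_const, Finset.card_univ,
        Fintype.card_fin] at h1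
      rw [h3, ← h1, Finset.sum_mul, sub_eq_zero]
      refine Finset.sum_congr rfl fun a _ => ?_
      field_simp
  have hc := congrArg (MvPolynomial.coeff (ty k)) hP
  simp only [P, MvPolynomial.coeff_sum, MvPolynomial.coeff_monomial, MvPolynomial.coeff_zero] at hc
  rw [← Finset.sum_filter, Finset.sum_congr rfl
    (g := fun _ => (#{k' : Fin N → Fin M | ty k' = ty k} : ℂ) * Φ k k - c), Finset.sum_const,
    nsmul_eq_mul] at hc
  · have h1 := card_cls_ne k
    have h2 := (mul_eq_zero.1 hc).resolve_left h1
    field_simp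
    linear_combination h2
  · intro a ha
    have ha : ty a = ty k := by simpa using ha
    rw [ha, hΦ a k a k ha ha]

lemma compact_unitary (M : ℕ) : CompactSpace (Matrix.unitaryGroup (Fin M) ℂ) := by
  have hs : IsCompact ({A : Matrix (Fin M) (Fin M) ℂ | ∀ i j, A i j ∈ Metric.closedBall (0 : ℂ) 1}) :=
    isCompact_pi_infinite fun _ => isCompact_pi_infinite fun _ => isCompact_closedBall 0 1
  have hc : IsClosed {A : Matrix (Fin M) (Fin M) ℂ | A * star A = 1} :=
    isClosed_eq (by fun_prop) continuous_const
  have : IsCompact ((Matrix.unitaryGroup (Fin M) ℂ : Set (Matrix (Fin M) (Fin M) ℂ))) := by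
    refine (hs.inter_right hc).of_isClosed_subset ?_ ?_
    · convert hc using 1
      ext A
      exact Matrix.mem_unitaryGroup_iff
    · intro A hA
      refine ⟨fun i j => ?_, Matrix.mem_unitaryGroup_iff.1 hA⟩
      simpa using entry_norm_bound_of_unitary hA i j
  exact isCompact_iff_compactSpace.1 this

lemma exists_row {M : ℕ} (z : Fin M) (x : Fin M → ℝ) (hx : ∑ p, x p ^ 2 = 1) :
    ∃ V : Matrix.unitaryGroup (Fin M) ℂ, ∀ p, (V : Matrix (Fin M) (Fin M) ℂ) z p = x p := by
  let v : EuclideanSpace ℂ (Fin M) := WithLp.toLp 2 (fun p => (x p : ℂ))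
  have hv : ‖v‖ = 1 := by
    rw [EuclideanSpace.norm_eq]
    simp [v, hx]
  have ho : Orthonormal ℂ (({z} : Set (Fin M)).domRestrict (fun _ => v)) := by
    constructor
    · intro i; simpa using hv
    · intro i j hij
      exact absurd (Subsingleton.elim i j) hij
  obtain ⟨b, hb⟩ := ho.exists_orthonormalBasis_extension_of_card_eq (by simp)
  refine ⟨⟨Matrix.of fun i p => b i p, ?_⟩, ?_⟩
  · rw [Matrix.mem_unitaryGroup_iff]
    ext i j
    rw [Matrix.mul_apply]
    have := orthonormal_iff_ite.1 b.orthonormal j i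
    rw [PiLp.inner_apply] at this
    simp only [Matrix.star_apply, Matrix.of_apply, Matrix.one_apply]
    simp only [RCLike.inner_apply] at this
    simp only [eq_comm (a := i)]
    exact this
  · intro p
    simp [hb z rfl, v]

lemma exists_col {M : ℕ} (z : Fin M) (x : Fin M → ℝ) (hx : ∑ p, x p ^ 2 = 1) :
    ∃ V : Matrix.unitaryGroup (Fin M) ℂ, ∀ p, (V : Matrix (Fin M) (Fin M) ℂ) p z = x p := by
  obtain ⟨V, hV⟩ := exists_row z x hx
  refine ⟨star V, fun p => ?_⟩
  rw [Unitary.coe_star, Matrix.star_apply, hV]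
  simp

lemma exists_diag {M : ℕ} (θ : Fin M → ℂ) (hθ : ∀ p, ‖θ p‖ = 1) :
    ∃ V : Matrix.unitaryGroup (Fin M) ℂ, (V : Matrix (Fin M) (Fin M) ℂ) = Matrix.diagonal θ := by
  refine ⟨⟨Matrix.diagonal θ, ?_⟩, rfl⟩
  rw [Matrix.mem_unitaryGroup_iff, Matrix.star_eq_conjTranspose, Matrix.diagonal_conjTranspose,
    Matrix.diagonal_mul_diagonal, ← Matrix.diagonal_one]
  congr 1
  funext p
  have := Complex.mul_conj (θ p)
  simp only [Pi.star_apply, RCLike.star_def]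
  rw [this, Complex.normSq_eq_norm_sq, hθ]; simp

lemma lemB {N M : ℕ} (hM : 1 ≤ M) {G : Type*} [TopologicalSpace G] [CompactSpace G]
    [MeasurableSpace G] [BorelSpace G] (μ : Measure G) [IsFiniteMeasure μ]
    (f : G → (Fin N → Fin M) → ℂ) (h : G → ℂ)
    (hf : ∀ k, Continuous fun U => f U k)
    (hs : ∀ U k (σ : Equiv.Perm (Fin N)), f U (k ∘ σ) = f U k)
    (hph : ∀ θ : Fin M → ℂ, (∀ p, ‖θ p‖ = 1) → ∃ τ : G → G,
      (∀ F : G → ℂ, ∫ U, F (τ U) ∂μ = ∫ U, F U ∂μ) ∧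
      ∀ U k, f (τ U) k = (∏ i, θ (k i)) * f U k)
    (hx : ∀ x : Fin M → ℝ, ∑ p, x p ^ 2 = 1 → ∃ τ : G → G,
      (∀ F : G → ℂ, ∫ U, F (τ U) ∂μ = ∫ U, F U ∂μ) ∧
      ∀ U, h (τ U) = ∑ k, (∏ i, (x (k i) : ℂ)) * f U k)
    (k k' : Fin N → Fin M) :
    ∫ U, f U k * (starRingEnd ℂ) (f U k') ∂μ = if ty k = ty k' then
      (∫ U, h U * (starRingEnd ℂ) (h U) ∂μ) * (#{k' : Fin N → Fin M | ty k' = ty k} : ℂ)⁻¹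
      else 0 := by
  refine lemA hM (fun k k' => ∫ U, f U k * (starRingEnd ℂ) (f U k') ∂μ) _ ?_ ?_ ?_ ?_ k k'
  · intro k k' σ; simp only [hs]
  · intro k k' σ; simp only [hs]
  · intro k k' hne
    obtain ⟨p, hp⟩ := DFunLike.ne_iff.1 hne
    set K := ty k p + ty k' p + 1 with hK
    have hζ := Complex.isPrimitiveRoot_exp K (by omega)
    set ζ := Complex.exp (2 * Real.pi * Complex.I / K) with hζd
    have hn : ‖ζ‖ = 1 := hζ.norm'_eq_one (by omega)
    have hpr : ∀ k : Fin N → Fin M,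
        ∏ i, (if k i = p then ζ else 1) = ζ ^ (ty k p) := by
      intro k
      rw [ty_apply, Finset.prod_ite]; simp
    obtain ⟨τ, hτ, hτf⟩ := hph (fun q => if q = p then ζ else 1) (by
      intro q; split_ifs <;> simp [hn])
    have h1 := hτ (fun U => f U k * (starRingEnd ℂ) (f U k'))
    simp only [hτf, hpr, map_mul, map_pow] at h1
    have h2 : ∀ U, ζ ^ (ty k p) * f U k * ((starRingEnd ℂ) ζ ^ (ty k' p) * (starRingEnd ℂ) (f U k'))
      = (ζ ^ (ty k p) * (starRingEnd ℂ) ζ ^ (ty k' p)) * (f U k * (starRingEnd ℂ) (f U k')) := by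
      intro U; ring
    simp only [h2] at h1
    rw [integral_const_mul] at h1
    by_contra hI
    have h3 := mul_right_cancel₀ hI (h1.trans (one_mul _).symm)
    have hzz : ζ * (starRingEnd ℂ) ζ = 1 := by
      rw [Complex.mul_conj, Complex.normSq_eq_norm_sq, hn]; simp
    have h4 : ζ ^ (ty k p) = ζ ^ (ty k' p) := by
      calc ζ ^ (ty k p) = ζ ^ (ty k p) * (ζ * (starRingEnd ℂ) ζ) ^ (ty k' p) := by simp [hzz]
        _ = (ζ ^ (ty k p) * (starRingEnd ℂ) ζ ^ (ty k' p)) * ζ ^ (ty k' p) := by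
          rw [mul_pow]; ring
        _ = _ := by rw [h3, one_mul]
    exact hp (hζ.pow_inj (by omega) (by omega) h4)
  · intro x hx1
    obtain ⟨τ, hτ, hτh⟩ := hx x hx1
    have h1 := hτ (fun U => h U * (starRingEnd ℂ) (h U))
    rw [← h1]
    have hint : ∀ k k', Integrable (fun U => (∏ i, (x (k i) : ℂ)) * (∏ i, (x (k' i) : ℂ)) *
        (f U k * (starRingEnd ℂ) (f U k'))) μ := by
      intro k k'
      refine Continuous.integrable_of_hasCompactSupport ?_ (HasCompactSupport.of_compactSpace _)
      have := hf k
      have := hf k'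
      have := Complex.continuous_conj.comp (hf k')
      simp only [Function.comp_def] at this
      fun_prop
    simp only [← integral_const_mul]
    rw [Finset.sum_congr rfl (fun k _ => (integral_finsetSum _ (fun k' _ => hint k k')).symm),
      ← integral_finsetSum _ (fun k _ => integrable_finsetSum _ (fun k' _ => hint k k'))]
    refine integral_congr_ae (Filter.Eventually.of_forall fun U => ?_)
    simp only [hτh, map_sum, map_mul, map_prod, Complex.conj_ofReal]
    rw [Finset.sum_mul_sum]
    refine Finset.sum_congr rfl fun a _ => Finset.sum_congr rfl fun b _ => ?_
    ring

lemma right_inv {G : Type*} [TopologicalSpace G] [Group G] [IsTopologicalGroup G] [CompactSpace G]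
    [MeasurableSpace G] [BorelSpace G] (μ : Measure G) [μ.IsHaarMeasure] [IsProbabilityMeasure μ] :
    μ.IsMulRightInvariant := by
  refine ⟨fun g => ?_⟩
  have : IsProbabilityMeasure (μ.map (· * g)) :=
    Measure.isProbabilityMeasure_map (by fun_prop)
  exact Measure.isHaarMeasure_eq_of_isProbabilityMeasure _ _

lemma sum_perm {N M : ℕ} (x : Fin M → ℂ) (U : Matrix (Fin M) (Fin M) ℂ) (l : Fin N → Fin M) :
    ∑ k : Fin N → Fin M, (∏ i, x (k i)) * perm (fun i j => U (k i) (l j))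
      = (N.factorial : ℂ) * ∏ j, ∑ p, x p * U p (l j) := by
  simp only [perm, Finset.mul_sum]
  rw [Finset.sum_comm]
  have : ∀ σ : Equiv.Perm (Fin N), ∑ k : Fin N → Fin M, (∏ i, x (k i)) * ∏ i, U (k i) (l (σ i))
      = ∏ j, ∑ p, x p * U p (l j) := by
    intro σ
    simp only [← Finset.prod_mul_distrib]
    rw [← Equiv.prod_comp σ (fun j => ∑ p, x p * U p (l j)), Finset.prod_univ_sum,
      Fintype.piFinset_univ]
  rw [Finset.sum_congr rfl (fun σ _ => this σ)]
  simp [Fintype.card_perm]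

lemma cont_entry {M : ℕ} (p q : Fin M) :
    Continuous fun U : Matrix.unitaryGroup (Fin M) ℂ => (U : Matrix (Fin M) (Fin M) ℂ) p q :=
  continuous_subtype_val.matrix_elem p q

theorem haar_average_permanents
    (M N : ℕ) (hM : 1 ≤ M) (hN : 1 ≤ N)
    [MeasurableSpace (Matrix.unitaryGroup (Fin M) ℂ)]
    [BorelSpace (Matrix.unitaryGroup (Fin M) ℂ)]
    (μ : Measure (Matrix.unitaryGroup (Fin M) ℂ))
    [μ.IsHaarMeasure] [IsProbabilityMeasure μ]
    (k k' l : Fin N → Fin M) :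
    ∫ U : Matrix.unitaryGroup (Fin M) ℂ,
        perm (fun i j => (U : Matrix (Fin M) (Fin M) ℂ) (k i) (l j)) *
          (starRingEnd ℂ) (perm (fun i j => (U : Matrix (Fin M) (Fin M) ℂ) (k' i) (l j))) ∂μ
    = if ∀ p : Fin M,
          ({i | k i = p} : Finset (Fin N)).card = ({i | k' i = p} : Finset (Fin N)).card
      then (∏ p : Fin M, (({i | k i = p} : Finset (Fin N)).card.factorial : ℂ)) *
            (∏ p : Fin M, (({j | l j = p} : Finset (Fin N)).card.factorial : ℂ)) *
            (N.factorial : ℂ) * ((M - 1).factorial : ℂ) / ((M + N - 1).factorial : ℂ)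
      else 0 := by
  have := compact_unitary M
  have := right_inv μ
  let z : Fin M := ⟨0, hM⟩
  -- first application
  have hA := lemB hM μ (fun U k => perm (fun i j => (U : Matrix (Fin M) (Fin M) ℂ) (k i) (l j)))
    (fun U => (N.factorial : ℂ) * ∏ j, (U : Matrix (Fin M) (Fin M) ℂ) z (l j))
    (by
      intro k
      unfold perm
      exact continuous_finsetSum _ fun σ _ => continuous_finsetProd _ fun i _ => cont_entry _ _)
    (by
      intro U k σ
      simp only [perm, Function.comp]
      rw [← Equiv.sum_comp (Equiv.mulRight σ)]
      refine Finset.sum_congr rfl fun τ _ => ?_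
      exact Equiv.prod_comp σ
        (fun i => (U : Matrix (Fin M) (Fin M) ℂ) (k i) (l (τ i))))
    (by
      intro θ hθ
      obtain ⟨V, hV⟩ := exists_diag θ hθ
      refine ⟨fun U => V * U, fun F => integral_mul_left_eq_self F V, fun U k => ?_⟩
      simp only [perm, Matrix.UnitaryGroup.mul_val, hV, Matrix.diagonal_mul,
        Finset.prod_mul_distrib, Finset.mul_sum])
    (by
      intro x hx
      obtain ⟨V, hV⟩ := exists_row z x hx
      refine ⟨fun U => V * U, fun F => integral_mul_left_eq_self F V, fun U => ?_⟩
      rw [sum_perm (fun p => (x p : ℂ))]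
      simp only [Matrix.UnitaryGroup.mul_val, Matrix.mul_apply, hV])
    k k'
  -- second application
  have hB := lemB hM μ (fun U (k : Fin N → Fin M) =>
      ∏ j, (U : Matrix (Fin M) (Fin M) ℂ) z (k j))
    (fun U => ((U : Matrix (Fin M) (Fin M) ℂ) z z) ^ N)
    (by
      intro k
      exact continuous_finsetProd _ fun i _ => cont_entry _ _)
    (by
      intro U k σ
      exact Equiv.prod_comp σ
        (fun i => (U : Matrix (Fin M) (Fin M) ℂ) z (k i)))
    (by
      intro θ hθ
      obtain ⟨V, hV⟩ := exists_diag θ hθ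
      refine ⟨fun U => U * V, fun F => integral_mul_right_eq_self F V, fun U k => ?_⟩
      simp only [Matrix.UnitaryGroup.mul_val, hV, Matrix.mul_diagonal,
        Finset.prod_mul_distrib]
      ring)
    (by
      intro x hx
      obtain ⟨V, hV⟩ := exists_col z x hx
      refine ⟨fun U => U * V, fun F => integral_mul_right_eq_self F V, fun U => ?_⟩
      simp only [Matrix.UnitaryGroup.mul_val, Matrix.mul_apply, hV, Fintype.sum_pow,
        Finset.prod_mul_distrib]
      exact Finset.sum_congr rfl fun k _ => mul_comm _ _)
  set e := ∫ U : Matrix.unitaryGroup (Fin M) ℂ, ((U : Matrix (Fin M) (Fin M) ℂ) z z) ^ N *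
    (starRingEnd ℂ) (((U : Matrix (Fin M) (Fin M) ℂ) z z) ^ N) ∂μ with he
  have hBl := fun l => hB l l
  simp only [if_true] at hBl
  have hsum : e * ((M + N - 1).choose N : ℂ) = 1 := by
    rw [← sum_cls, Finset.mul_sum, ← Finset.sum_congr rfl (fun l _ => hBl l),
      ← integral_finsetSum]
    · have : ∀ U : Matrix.unitaryGroup (Fin M) ℂ, ∑ l : Fin N → Fin M,
        (∏ j, (U : Matrix (Fin M) (Fin M) ℂ) z (l j)) *
          (starRingEnd ℂ) (∏ j, (U : Matrix (Fin M) (Fin M) ℂ) z (l j)) = 1 := by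
        intro U
        simp only [map_prod, ← Finset.prod_mul_distrib]
        rw [← Fintype.sum_pow (fun p => (U : Matrix (Fin M) (Fin M) ℂ) z p *
          (starRingEnd ℂ) ((U : Matrix (Fin M) (Fin M) ℂ) z p))]
        have h1 := congrFun (congrFun (Matrix.mem_unitaryGroup_iff.1 U.2) z) z
        rw [Matrix.mul_apply] at h1
        simp only [Matrix.star_apply, Matrix.one_apply_eq, RCLike.star_def] at h1
        rw [h1, one_pow]
      rw [integral_congr_ae (Filter.Eventually.of_forall this)]
      simp
    · intro l _
      refine Continuous.integrable_of_hasCompactSupport ?_ (HasCompactSupport.of_compactSpace _)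
      have h1 : Continuous fun U : Matrix.unitaryGroup (Fin M) ℂ =>
          ∏ j, (U : Matrix (Fin M) (Fin M) ℂ) z (l j) :=
        continuous_finsetProd _ fun i _ => cont_entry _ _
      exact h1.mul (Complex.continuous_conj.comp h1)
  have hC : ∫ U : Matrix.unitaryGroup (Fin M) ℂ,
      (N.factorial : ℂ) * (∏ j, (U : Matrix (Fin M) (Fin M) ℂ) z (l j)) *
      (starRingEnd ℂ) ((N.factorial : ℂ) * ∏ j, (U : Matrix (Fin M) (Fin M) ℂ) z (l j)) ∂μ
      = (N.factorial : ℂ) ^ 2 * (e * (#{k' : Fin N → Fin M | ty k' = ty l} : ℂ)⁻¹) := by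
    rw [← hBl l, ← integral_const_mul]
    refine integral_congr_ae (Filter.Eventually.of_forall fun U => ?_)
    simp only [map_mul, Complex.conj_natCast]
    ring
  rw [hC] at hA
  rw [hA]
  have hiff : ty k = ty k' ↔ ∀ p : Fin M,
          ({i | k i = p} : Finset (Fin N)).card = ({i | k' i = p} : Finset (Fin N)).card := by
    rw [DFunLike.ext_iff]; simp only [ty_apply]
  refine if_congr hiff ?_ rfl
  rw [← fact_div, ← fact_div]
  have hch := Nat.choose_mul_factorial_mul_factorial (n := M + N - 1) (k := N) (by omega)
  rw [show M + N - 1 - N = M - 1 by omega] at hch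
  have hch' : ((M + N - 1).choose N : ℂ) * N.factorial * (M - 1).factorial = (M + N - 1).factorial := by
    exact_mod_cast hch
  have n1 : (N.factorial : ℂ) ≠ 0 := by exact_mod_cast N.factorial_ne_zero
  have n2 : ((M - 1).factorial : ℂ) ≠ 0 := by exact_mod_cast (M - 1).factorial_ne_zero
  have n3 : ((M + N - 1).choose N : ℂ) ≠ 0 := right_ne_zero_of_mul (hsum ▸ one_ne_zero)
  rw [← hch', eq_div_of_mul_eq n3 hsum]
  field_simp
end

section
/- Let 1 ≤ N ≤ M be natural numbers, let U be Haar-distributed on the unitary group U(M) (the group of M×M complex unitary matrices with its Haar probability measure), and let k, k', l : Fin N → Fin M be strictly increasing index tuples. For an M×M matrix U define the N×N matrices A(U)_{ij} = U_{k_i, l_j} and B(U)_{ij} = U_{k'_i, l_j}. Then ∫ det(A(U)) · conj(det(B(U))) dU equals N! · (M−N)!/M! if k = k', and equals 0 otherwise. -/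
open MeasureTheory Finset

namespace HaarAux

lemma compactU (M : ℕ) : CompactSpace (Matrix.unitaryGroup (Fin M) ℂ) := by
  refine (isCompact_iff_compactSpace (s := (Matrix.unitaryGroup (Fin M) ℂ : Set (Matrix (Fin M) (Fin M) ℂ)))).1 ?_
  have hK : IsCompact (Set.univ.pi fun _ : Fin M => Set.univ.pi fun _ : Fin M =>
      Metric.closedBall (0 : ℂ) 1) :=
    isCompact_univ_pi fun _ => isCompact_univ_pi fun _ => isCompact_closedBall _ _
  refine IsCompact.of_isClosed_subset (X := Matrix (Fin M) (Fin M) ℂ) hK ?_ ?_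
  · have : (Matrix.unitaryGroup (Fin M) ℂ : Set (Matrix (Fin M) (Fin M) ℂ))
        = {A | A * star A = 1} := by
      ext A; exact Matrix.mem_unitaryGroup_iff
    rw [this]
    exact isClosed_eq (by fun_prop) continuous_const
  · intro A hA i _ j _
    simpa using entry_norm_bound_of_unitary hA i j

/-- submatrix determinant -/
noncomputable def D {M N : ℕ} (l : Fin N → Fin M) (f : Fin N → Fin M)
    (U : Matrix (Fin M) (Fin M) ℂ) : ℂ :=
  Matrix.det (Matrix.of fun i j => U (f i) (l j))

/-- the summand -/
noncomputable def c {M N : ℕ} (l : Fin N → Fin M) (f : Fin N → Fin M)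
    (U : Matrix (Fin M) (Fin M) ℂ) : ℂ :=
  (∏ i, U (f i) (l i)) * (starRingEnd ℂ) (D l f U)

lemma D_cont {M N : ℕ} (l f : Fin N → Fin M) : Continuous (D l f) := by
  unfold D
  refine Continuous.matrix_det ?_
  refine continuous_matrix fun i j => ?_
  exact continuous_id.matrix_elem (f i) (l j)

lemma c_cont {M N : ℕ} (l f : Fin N → Fin M) : Continuous (c l f) := by
  unfold c
  refine Continuous.mul ?_ (Complex.continuous_conj.comp (D_cont l f))
  exact continuous_finsetProd _ fun i _ => continuous_id.matrix_elem (f i) (l i)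

lemma D_perm {M N : ℕ} (l f : Fin N → Fin M) (σ : Equiv.Perm (Fin N)) (U) :
    D l (f ∘ σ) U = (Equiv.Perm.sign σ : ℂ) * D l f U := by
  unfold D
  rw [← Matrix.det_permute]; rfl

lemma D_mul {M N : ℕ} (l k : Fin N → Fin M) (U) :
    D l k U * (starRingEnd ℂ) (D l k U) = ∑ σ : Equiv.Perm (Fin N), c l (k ∘ σ) U := by
  have h : D l k U = ∑ σ : Equiv.Perm (Fin N), (Equiv.Perm.sign σ : ℂ) * ∏ i, U (k (σ i)) (l i) := by
    unfold D; rw [Matrix.det_apply']; rfl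
  conv_lhs => rw [h, Finset.sum_mul]
  rw [← h]
  refine Finset.sum_congr rfl fun σ _ => ?_
  unfold c
  rw [D_perm]
  simp only [Function.comp, map_mul, map_intCast]
  ring

lemma sum_c {M N : ℕ} (l : Fin N → Fin M) (hl : Function.Injective l)
    (U : Matrix.unitaryGroup (Fin M) ℂ) :
    ∑ f : Fin N → Fin M, c l f U = 1 := by
  have h1 : (star (U : Matrix (Fin M) (Fin M) ℂ) * U).submatrix l l = 1 := by
    rw [Matrix.mem_unitaryGroup_iff'.1 U.2, Matrix.submatrix_one _ hl]
  have h2 := congrArg Matrix.det h1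
  rw [Matrix.det_one, Matrix.det_apply'] at h2
  rw [← h2]
  have h3 : ∀ σ : Equiv.Perm (Fin N),
      ∏ i, (star (U : Matrix (Fin M) (Fin M) ℂ) * U).submatrix l l (σ i) i
      = ∑ f : Fin N → Fin M, ∏ i, ((starRingEnd ℂ) (U.1 (f i) (l (σ i))) * U.1 (f i) (l i)) := by
    intro σ
    have := Finset.prod_univ_sum (fun _ : Fin N => (Finset.univ : Finset (Fin M)))
      (fun i m => (starRingEnd ℂ) (U.1 m (l (σ i))) * U.1 m (l i))
    rw [Fintype.piFinset_univ] at this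
    rw [← this]
    rfl
  simp only [h3, Finset.mul_sum]
  rw [Finset.sum_comm]
  refine Finset.sum_congr rfl fun f _ => ?_
  unfold c D
  rw [← Matrix.det_transpose, Matrix.det_apply', map_sum, Finset.mul_sum]
  refine Finset.sum_congr rfl fun σ _ => ?_
  simp only [map_mul, map_intCast, map_prod, Finset.prod_mul_distrib, Matrix.transpose_apply,
    Matrix.of_apply]
  ring

lemma c_notinj {M N : ℕ} (l f : Fin N → Fin M) (hf : ¬ Function.Injective f) (U) :
    c l f U = 0 := by
  unfold Function.Injective at hf
  push Not at hf
  obtain ⟨i, j, hij, hne⟩ := hf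
  have : D l f U = 0 := by
    unfold D
    refine Matrix.det_zero_of_row_eq hne ?_
    ext x; simp [hij]
  simp [c, this]

/-- permutation matrix -/
noncomputable def P {M : ℕ} (π : Equiv.Perm (Fin M)) : Matrix.unitaryGroup (Fin M) ℂ :=
  ⟨(1 : Matrix (Fin M) (Fin M) ℂ).submatrix π id, by
    rw [Matrix.mem_unitaryGroup_iff]
    ext i j
    simp [Matrix.mul_apply, Matrix.one_apply, Matrix.star_apply, eq_comm]⟩

lemma P_mul {M : ℕ} (π : Equiv.Perm (Fin M)) (U : Matrix.unitaryGroup (Fin M) ℂ) (i j) :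
    ((P π * U : Matrix.unitaryGroup (Fin M) ℂ) : Matrix (Fin M) (Fin M) ℂ) i j = U.1 (π i) j := by
  simp [P, Matrix.mul_apply, Matrix.one_apply]

/-- sign flip of one row -/
noncomputable def S {M : ℕ} (m : Fin M) : Matrix.unitaryGroup (Fin M) ℂ :=
  ⟨Matrix.diagonal fun i => if i = m then -1 else 1, by
    rw [Matrix.mem_unitaryGroup_iff, Matrix.star_eq_conjTranspose, Matrix.diagonal_conjTranspose,
      Matrix.diagonal_mul_diagonal, ← Matrix.diagonal_one]
    congr 1
    ext i
    by_cases h : i = m <;> simp [h]⟩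

lemma S_mul {M : ℕ} (m : Fin M) (U : Matrix.unitaryGroup (Fin M) ℂ) (i j) :
    ((S m * U : Matrix.unitaryGroup (Fin M) ℂ) : Matrix (Fin M) (Fin M) ℂ) i j
      = (if i = m then -1 else 1) * U.1 i j := by
  simp [S, Matrix.diagonal_mul]

lemma D_S {M N : ℕ} (l f : Fin N → Fin M) (m : Fin M) (U : Matrix.unitaryGroup (Fin M) ℂ) :
    D l f (S m * U : Matrix.unitaryGroup (Fin M) ℂ)
      = (∏ i, (if f i = m then -1 else 1 : ℂ)) * D l f U := by
  unfold D
  rw [← Matrix.det_mul_column]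
  congr 1
  ext i j
  simp only [Matrix.of_apply, S_mul]

end HaarAux

open HaarAux in
/-- Haar average over the unitary group `U(M)` of a product of a determinant and the
conjugate of another determinant, for submatrices built on strictly increasing index
tuples `k, k', l : Fin N → Fin M`: it equals `N!·(M-N)!/M!` when `k = k'`,
and `0` otherwise. -/
theorem haar_average_determinants
    (M N : ℕ) (hN : 1 ≤ N) (hNM : N ≤ M)
    [MeasurableSpace (Matrix.unitaryGroup (Fin M) ℂ)]
    [BorelSpace (Matrix.unitaryGroup (Fin M) ℂ)]
    (μ : Measure (Matrix.unitaryGroup (Fin M) ℂ))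
    [μ.IsHaarMeasure] [IsProbabilityMeasure μ]
    (k k' l : Fin N → Fin M)
    (hk : StrictMono k) (hk' : StrictMono k') (hl : StrictMono l) :
    ∫ U : Matrix.unitaryGroup (Fin M) ℂ,
        Matrix.det (Matrix.of fun i j => (U : Matrix (Fin M) (Fin M) ℂ) (k i) (l j)) *
          (starRingEnd ℂ)
            (Matrix.det (Matrix.of fun i j => (U : Matrix (Fin M) (Fin M) ℂ) (k' i) (l j))) ∂μ
    = if k = k' then (N.factorial : ℂ) * ((M - N).factorial : ℂ) / (M.factorial : ℂ)
      else 0 := by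
  change ∫ U : Matrix.unitaryGroup (Fin M) ℂ, D l k U * (starRingEnd ℂ) (D l k' U) ∂μ = _
  have := compactU M
  split_ifs with hkk
  · subst hkk
    have hint : ∀ f, Integrable (fun U : Matrix.unitaryGroup (Fin M) ℂ => c l f U) μ := fun f =>
      ((c_cont l f).comp continuous_subtype_val).integrable_of_hasCompactSupport
        (HasCompactSupport.of_compactSpace _)
    have hinv : ∀ f : Fin N → Fin M, Function.Injective f →
        ∫ U : Matrix.unitaryGroup (Fin M) ℂ, c l f U ∂μ
          = ∫ U : Matrix.unitaryGroup (Fin M) ℂ, c l k U ∂μ := by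
      intro f hf
      obtain ⟨π, hπ⟩ := Equiv.Perm.exists_extending_pair k f hk.injective hf
      rw [← integral_mul_left_eq_self (fun U : Matrix.unitaryGroup (Fin M) ℂ => c l k U) (P π)]
      congr 1
      ext U
      simp only [c, D, P_mul, hπ]
    set C := ∫ U : Matrix.unitaryGroup (Fin M) ℂ, c l k U ∂μ with hC
    have hsum : (M.descFactorial N : ℂ) * C = 1 := by
      have h1 : ∫ U : Matrix.unitaryGroup (Fin M) ℂ, ∑ f : Fin N → Fin M, c l f U ∂μ = 1 := by
        simp [sum_c l hl.injective]
      rw [integral_finsetSum _ fun f _ => hint f] at h1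
      have h2 : ∀ f : Fin N → Fin M, ∫ U : Matrix.unitaryGroup (Fin M) ℂ, c l f U ∂μ
          = if Function.Injective f then C else 0 := by
        intro f
        split_ifs with hf
        · exact hinv f hf
        · simp [c_notinj l f hf]
      simp only [h2] at h1
      rw [← Finset.sum_filter, Finset.sum_const, nsmul_eq_mul, ← Fintype.card_subtype,
        Fintype.card_congr (Equiv.subtypeInjectiveEquivEmbedding (Fin N) (Fin M)),
        Fintype.card_embedding_eq] at h1
      simpa using h1
    simp only [D_mul]
    rw [integral_finsetSum _ fun f _ => hint _]
    simp only [hinv _ (hk.injective.comp (Equiv.injective _))]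
    rw [Finset.sum_const, Finset.card_univ, Fintype.card_perm, Fintype.card_fin, nsmul_eq_mul]
    have h3 : ((M - N).factorial : ℂ) * (M.descFactorial N : ℂ) = M.factorial := by
      exact_mod_cast Nat.factorial_mul_descFactorial hNM
    have h4 : (M.factorial : ℂ) ≠ 0 := by exact_mod_cast M.factorial_ne_zero
    rw [eq_div_iff h4, ← h3]
    linear_combination (N.factorial : ℂ) * ((M - N).factorial : ℂ) * hsum
  · have hex : ∃ i, ∀ j, k' j ≠ k i := by
      by_contra! hcon
      apply hkk
      have hsub : Finset.univ.image k ⊆ Finset.univ.image k' := by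
        intro x hx
        simp only [Finset.mem_image, Finset.mem_univ, true_and] at hx ⊢
        obtain ⟨i, rfl⟩ := hx
        exact hcon i
      have heq := Finset.eq_of_subset_of_card_le hsub (by
        rw [Finset.card_image_of_injective _ hk.injective,
          Finset.card_image_of_injective _ hk'.injective])
      refine (StrictMono.range_inj hk hk').1 ?_
      simpa [← Finset.coe_inj] using heq
    obtain ⟨i, hi⟩ := hex
    have h := integral_mul_left_eq_self (μ := μ)
      (fun U : Matrix.unitaryGroup (Fin M) ℂ => D l k U * (starRingEnd ℂ) (D l k' U)) (S (k i))
    simp only [D_S, hi, hk.injective.eq_iff] at h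
    simp only [Finset.prod_ite_eq', Finset.mem_univ, if_true, if_false, Finset.prod_const_one,
      one_mul, neg_mul, integral_neg] at h
    exact self_eq_neg.1 h.symm
end
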